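/- arXiv:2407.03485 — 11 statements merged into one kernel-verified Lean document; each statement's English description precedes it below -/
import Mathlib

section
/- Let T be a maximal monotone operator on a real Hilbert space H, λ > 0, σ ∈ [0,1), ε ≥ 0, and let (y, v, ε) be a σ-approximate solution of the proximal system at (x, λ), i.e. v ∈ T^ε(y) and ‖λv + y − x‖² + 2λε ≤ σ²(‖λv‖² + ‖y − x‖²). Then the following three statements are equivalent: (i) v = 0; (ii) 0 ∈ T(x); (iii) y = x; and any of them implies ε = 0. -/
open scoped RealInnerProductSpace

variable {H : Type*} [NormedAddCommGroup H] [InnerProductSpace ℝ H]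

/-- A set-valued operator is monotone. -/
def IsMonotoneOp (T : H → Set H) : Prop :=
  ∀ x y u v, u ∈ T x → v ∈ T y → 0 ≤ ⟪u - v, x - y⟫

/-- A set-valued operator is maximal monotone. -/
def IsMaxMonotoneOp (T : H → Set H) : Prop :=
  IsMonotoneOp T ∧ ∀ x v, (∀ y u, u ∈ T y → 0 ≤ ⟪u - v, y - x⟫) → v ∈ T x

/-- The ε-enlargement of a set-valued operator. -/
def enl (T : H → Set H) (ε : ℝ) (y : H) : Set H :=
  {v | ∀ z u, u ∈ T z → ⟪u - v, z - y⟫ ≥ -ε}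

/-- Lemma 2.2 (second part): for a σ-approximate solution of the proximal system,
v = 0, 0 ∈ T(x) and y = x are equivalent, and any of them implies ε = 0. -/
theorem stmt1 (T : H → Set H) (hT : IsMaxMonotoneOp T)
    (lam σ ε : ℝ) (hlam : 0 < lam) (hσ0 : 0 ≤ σ) (hσ1 : σ < 1) (hε : 0 ≤ ε)
    (x y v : H)
    (hincl : v ∈ enl T ε y)
    (herr : ‖lam • v + y - x‖ ^ 2 + 2 * lam * ε ≤
      σ ^ 2 * (‖lam • v‖ ^ 2 + ‖y - x‖ ^ 2)) :
    ((v = 0 ↔ (0 : H) ∈ T x) ∧ ((0 : H) ∈ T x ↔ y = x)) ∧ (v = 0 → ε = 0) := by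
  have hs : 0 < 1 - σ ^ 2 := by nlinarith
  have hexp : ‖lam • v + y - x‖ ^ 2 =
      ‖lam • v‖ ^ 2 + 2 * (lam * ⟪v, y - x⟫) + ‖y - x‖ ^ 2 := by
    rw [add_sub_assoc, norm_add_sq_real, real_inner_smul_left]
  have hle : 0 ≤ lam * ε := by positivity
  -- The key estimate: a lower bound on the inner product forces everything to vanish.
  have key : 0 ≤ lam * ⟪v, y - x⟫ + lam * ε → v = 0 ∧ y = x := by
    intro h
    have hA := sq_nonneg ‖lam • v‖
    have hB := sq_nonneg ‖y - x‖
    have hsum : (1 - σ ^ 2) * (‖lam • v‖ ^ 2 + ‖y - x‖ ^ 2) ≤ 0 := by linarith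
    have hsum' : ‖lam • v‖ ^ 2 + ‖y - x‖ ^ 2 ≤ 0 := by
      by_contra! hc
      have := mul_pos hs hc
      linarith
    have hA0 : ‖lam • v‖ ^ 2 = 0 := by linarith
    have hB0 : ‖y - x‖ ^ 2 = 0 := by linarith
    constructor
    · have : lam • v = 0 := by simpa using hA0
      exact (smul_eq_zero.mp this).resolve_left hlam.ne'
    · exact sub_eq_zero.mp (by simpa using hB0)
  have hzero : v = 0 → y = x → ε = 0 ∧ (0 : H) ∈ T x := by
    intro hv hy
    subst hv hy
    have h1 : 2 * lam * ε ≤ 0 := by simpa using herr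
    have h2 : ε = 0 := by nlinarith
    refine ⟨h2, hT.2 _ _ fun z u hu => ?_⟩
    have := hincl z u hu
    linarith
  have hv : v = 0 → v = 0 ∧ y = x := fun h => key (by rw [h]; simpa using hle)
  have hy : y = x → v = 0 ∧ y = x := fun h => key (by rw [h]; simpa using hle)
  have hT0 : (0 : H) ∈ T x → v = 0 ∧ y = x := by
    intro h
    apply key
    have h1 := hincl x 0 h
    have h2 : ⟪(0 : H) - v, x - y⟫ = ⟪v, y - x⟫ := by
      rw [zero_sub, ← neg_sub y x, inner_neg_neg]
    rw [h2] at h1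
    nlinarith
  refine ⟨⟨⟨fun h => ?_, fun h => (hT0 h).1⟩, ⟨fun h => (hT0 h).2, fun h => ?_⟩⟩, fun h => ?_⟩
  · exact (hzero h (hv h).2).2
  · exact (hzero (hy h).1 h).2
  · exact (hzero h (hv h).2).1
end

section
/- Let T be a maximal monotone operator on a real Hilbert space H, λ > 0, σ ∈ [0,1), ε ≥ 0, and let (y, v, ε) be a σ-approximate solution of the proximal system at (x, λ), i.e. v ∈ T^ε(y) and ‖λv + y − x‖² + 2λε ≤ σ²(‖λv‖² + ‖y − x‖²). Let H' := {z ∈ H : ⟨z − y, v⟩ ≤ ε} and let p ∈ H' satisfy ‖p − x‖ ≤ ‖z − x‖ for all z ∈ H' (i.e. p is the orthogonal projection of x onto H'). Then ‖p − x‖ ≥ ((1 − σ²)/2) · max{λ‖v‖, ‖x − y‖}. -/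
open scoped RealInnerProductSpace

variable {H : Type*} [NormedAddCommGroup H] [InnerProductSpace ℝ H]

/-- Lemma 2.3: lower bound for the displacement of the projection of x onto the
half-space H' = {z : ⟪z - y, v⟫ ≤ ε}. -/
theorem stmt2 (T : H → Set H) (hT : IsMaxMonotoneOp T)
    (lam σ ε : ℝ) (hlam : 0 < lam) (hσ0 : 0 ≤ σ) (hσ1 : σ < 1) (hε : 0 ≤ ε)
    (x y v : H)
    (hincl : v ∈ enl T ε y)
    (herr : ‖lam • v + y - x‖ ^ 2 + 2 * lam * ε ≤
      σ ^ 2 * (‖lam • v‖ ^ 2 + ‖y - x‖ ^ 2))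
    (p : H) (hp : ⟪p - y, v⟫ ≤ ε)
    (hpmin : ∀ z : H, ⟪z - y, v⟫ ≤ ε → ‖p - x‖ ≤ ‖z - x‖) :
    (1 - σ ^ 2) / 2 * max (lam * ‖v‖) ‖x - y‖ ≤ ‖p - x‖ := by
  have h1 : ‖lam • v + y - x‖ ^ 2 =
      (lam * ‖v‖) ^ 2 + ‖x - y‖ ^ 2 - 2 * (lam * ⟪x - y, v⟫) := by
    have e : lam • v + y - x = lam • v - (x - y) := by abel
    rw [e, norm_sub_sq_real, real_inner_smul_left, real_inner_comm, norm_smul,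
      Real.norm_of_nonneg hlam.le]
    ring
  have h2 : ⟪p - y, v⟫ = ⟪p - x, v⟫ + ⟪x - y, v⟫ := by
    rw [← inner_add_left]
    congr 1
    abel
  have h3 : -(‖p - x‖ * ‖v‖) ≤ ⟪p - x, v⟫ :=
    neg_le_of_abs_le (abs_real_inner_le_norm _ _)
  rw [h1, norm_smul, Real.norm_of_nonneg hlam.le, norm_sub_rev y x] at herr
  have h4 : lam * (⟪x - y, v⟫ - ε) ≤ lam * (‖p - x‖ * ‖v‖) :=
    mul_le_mul_of_nonneg_left (by linarith) hlam.le
  have ha : 0 ≤ lam * ‖v‖ := by positivity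
  have hb : 0 ≤ ‖x - y‖ := norm_nonneg _
  have hd : 0 ≤ ‖p - x‖ := norm_nonneg _
  have hk : 0 < (1 - σ ^ 2) / 2 := by nlinarith
  have key : (1 - σ ^ 2) / 2 * ((lam * ‖v‖) ^ 2 + ‖x - y‖ ^ 2) ≤
      (lam * ‖v‖) * ‖p - x‖ := by linarith
  generalize lam * ‖v‖ = a at *
  generalize ‖x - y‖ = b at *
  generalize ‖p - x‖ = d at *
  generalize (1 - σ ^ 2) / 2 = k at *
  rcases ha.eq_or_lt with h0 | h0
  · subst h0
    have hb2 : b ^ 2 ≤ 0 := by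
      by_contra hc
      push Not at hc
      have := mul_pos hk hc
      linarith
    have : b = 0 := by nlinarith
    subst this
    simpa using hd
  · rw [mul_max_of_nonneg _ _ hk.le]
    refine max_le ?_ ?_
    · refine le_of_mul_le_mul_left ?_ h0
      nlinarith [mul_nonneg hk.le (sq_nonneg b)]
    · refine le_of_mul_le_mul_left ?_ h0
      nlinarith [mul_nonneg hk.le (sq_nonneg (a - b)), mul_nonneg hk.le (mul_nonneg ha hb)]
end

section
/- Consider the sequences generated by Algorithm 1 and let d₀ denote the distance of x₀ to the solution set S := {x : 0 ∈ T(x)}. Then for every k ≥ 0, ‖x_k − x₀‖ ≤ d₀. -/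
open scoped RealInnerProductSpace
open Filter Topology

variable {H : Type*} [NormedAddCommGroup H] [InnerProductSpace ℝ H] [CompleteSpace H]

/-- Proposition 3.1(b): ‖x_k − x₀‖ ≤ d₀. -/
theorem stmt4
    (T : H → Set H) (hT : IsMaxMonotoneOp T)
    (hS : {z : H | (0 : H) ∈ T z}.Nonempty)
    (σ : ℝ) (hσ0 : 0 ≤ σ) (hσ1 : σ < 1)
    (α β lam ε : ℕ → ℝ)
    (hα : ∀ k, 0 ≤ α k) (hβ : ∀ k, 0 ≤ β k)
    (hlam : ∀ k, 0 < lam k) (hε : ∀ k, 0 ≤ ε k)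
    (x w wt y v : ℕ → H)
    (hw : ∀ k, w k = x k + α k • (x k - x (k - 1)))
    (hwt : ∀ k, wt k = w k + β k • (w k - x 0))
    (hincl : ∀ k, v k ∈ enl T (ε k) (y k))
    (herr : ∀ k, ‖lam k • v k + y k - wt k‖ ^ 2 + 2 * lam k * ε k ≤
      σ ^ 2 * (‖lam k • v k‖ ^ 2 + ‖y k - wt k‖ ^ 2))
    (hmem : ∀ k, ⟪x (k + 1) - y k, v k⟫ ≤ ε k ∧ ⟪x (k + 1) - x k, x 0 - x k⟫ ≤ 0)
    (hproj : ∀ k, ∀ z : H, ⟪z - y k, v k⟫ ≤ ε k → ⟪z - x k, x 0 - x k⟫ ≤ 0 →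
      ‖x (k + 1) - x 0‖ ≤ ‖z - x 0‖) :
    ∀ k : ℕ, ‖x k - x 0‖ ≤ Metric.infDist (x 0) {z : H | (0 : H) ∈ T z} := by
  have hH : ∀ z : H, (0 : H) ∈ T z → ∀ k, ⟪z - y k, v k⟫ ≤ ε k := by
    intro z hz k
    have h := hincl k z 0 hz
    rw [zero_sub, inner_neg_left, real_inner_comm] at h
    linarith
  have hW : ∀ z : H, (0 : H) ∈ T z → ∀ k, ⟪z - x k, x 0 - x k⟫ ≤ 0 := by
    intro z hz k
    induction k with
    | zero => simp
    | succ k ih =>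
      by_contra hcon
      push Not at hcon
      obtain ⟨hm1, hm2⟩ := hmem k
      have hzH := hH z hz k
      set p := x (k + 1) with hp
      set a := ⟪z - p, x 0 - p⟫ with ha
      set n := ‖z - p‖ ^ 2 with hn
      have hn0 : 0 ≤ n := sq_nonneg _
      have han : 0 < a + n := by linarith
      set t := a / (a + n) with ht
      have ht0 : 0 < t := div_pos hcon han
      have ht1 : t ≤ 1 := (div_le_one han).2 (by linarith)
      have htan : t * (a + n) = a := div_mul_cancel₀ _ han.ne'
      have key : ∀ c d : H, ⟪p + t • (z - p) - c, d⟫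
          = (1 - t) * ⟪p - c, d⟫ + t * ⟪z - c, d⟫ := by
        intro c d
        simp only [inner_sub_left, inner_add_left, real_inner_smul_left]
        ring
      have h := hproj k (p + t • (z - p))
        (by rw [key]; nlinarith) (by rw [key]; nlinarith)
      have h2 : ‖p - x 0‖ ^ 2 ≤ ‖p + t • (z - p) - x 0‖ ^ 2 := by gcongr
      have h3 : p + t • (z - p) - x 0 = t • (z - p) - (x 0 - p) := by abel
      rw [h3, norm_sub_sq_real (t • (z - p)), real_inner_smul_left, norm_smul, mul_pow, ← ha, ← hn,
        Real.norm_eq_abs, sq_abs, norm_sub_rev p (x 0)] at h2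
      have h4 : 0 ≤ t * (t * n - 2 * a) := by linarith
      have h5 := nonneg_of_mul_nonneg_right h4 ht0
      have h6 : 0 < t * a := mul_pos ht0 hcon
      linarith
  intro k
  rw [Metric.le_infDist hS]
  intro z hz
  rw [dist_comm, dist_eq_norm]
  cases k with
  | zero => simp
  | succ k => exact hproj k z (hH z hz k) (hW z hz k)
end

section
/- Consider the sequences generated by Algorithm 1. Then for every k ≥ 0, ‖x_{k+1} − w̃_k‖ ≥ ((1 − σ²)/2) · max{λ_k‖v_k‖, ‖w̃_k − y_k‖}. -/
open scoped RealInnerProductSpace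
open Filter Topology

variable {H : Type*} [NormedAddCommGroup H] [InnerProductSpace ℝ H] [CompleteSpace H]

/-- Proposition 3.1(c): ‖x_{k+1} − w̃_k‖ ≥ ((1−σ²)/2)·max{λ_k‖v_k‖, ‖w̃_k − y_k‖}. -/
theorem stmt5
    (T : H → Set H) (hT : IsMaxMonotoneOp T)
    (hS : {z : H | (0 : H) ∈ T z}.Nonempty)
    (σ : ℝ) (hσ0 : 0 ≤ σ) (hσ1 : σ < 1)
    (α β lam ε : ℕ → ℝ)
    (hα : ∀ k, 0 ≤ α k) (hβ : ∀ k, 0 ≤ β k)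
    (hlam : ∀ k, 0 < lam k) (hε : ∀ k, 0 ≤ ε k)
    (x w wt y v : ℕ → H)
    (hw : ∀ k, w k = x k + α k • (x k - x (k - 1)))
    (hwt : ∀ k, wt k = w k + β k • (w k - x 0))
    (hincl : ∀ k, v k ∈ enl T (ε k) (y k))
    (herr : ∀ k, ‖lam k • v k + y k - wt k‖ ^ 2 + 2 * lam k * ε k ≤
      σ ^ 2 * (‖lam k • v k‖ ^ 2 + ‖y k - wt k‖ ^ 2))
    (hmem : ∀ k, ⟪x (k + 1) - y k, v k⟫ ≤ ε k ∧ ⟪x (k + 1) - x k, x 0 - x k⟫ ≤ 0)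
    (hproj : ∀ k, ∀ z : H, ⟪z - y k, v k⟫ ≤ ε k → ⟪z - x k, x 0 - x k⟫ ≤ 0 →
      ‖x (k + 1) - x 0‖ ≤ ‖z - x 0‖) :
    ∀ k : ℕ, (1 - σ ^ 2) / 2 * max (lam k * ‖v k‖) ‖wt k - y k‖ ≤ ‖x (k + 1) - wt k‖ := by
  intro k
  have hl := hlam k
  have h1 := (hmem k).1
  have h2 := herr k
  have hs : 0 < 1 - σ ^ 2 := by nlinarith
  have e1 : lam k • v k + y k - wt k = lam k • v k + (y k - wt k) := by abel
  have e2 : x (k + 1) - y k = (x (k + 1) - wt k) - (y k - wt k) := by abel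
  have e3 : ‖lam k • v k‖ = lam k * ‖v k‖ := by
    rw [norm_smul, Real.norm_of_nonneg hl.le]
  rw [e1, norm_add_sq_real, real_inner_smul_left, e3] at h2
  rw [e2, inner_sub_left, real_inner_comm (v k) (y k - wt k)] at h1
  rw [real_inner_comm] at h1
  have h3 := abs_le.mp (abs_real_inner_le_norm (v k) (x (k + 1) - wt k))
  rw [norm_sub_rev (wt k) (y k)]
  rw [real_inner_comm (y k - wt k) (v k)] at *
  rw [real_inner_comm (x (k + 1) - wt k) (v k)] at *
  generalize ⟪y k - wt k, v k⟫ = p at *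
  generalize ⟪x (k + 1) - wt k, v k⟫ = q at *
  have hA : 0 ≤ ‖v k‖ := norm_nonneg _
  have hB : 0 ≤ ‖y k - wt k‖ := norm_nonneg _
  have hD : 0 ≤ ‖x (k + 1) - wt k‖ := norm_nonneg _
  generalize ‖v k‖ = a at *
  generalize ‖y k - wt k‖ = B at *
  generalize ‖x (k + 1) - wt k‖ = D at *
  have h4 : lam k * (q - p) ≤ lam k * ε k := mul_le_mul_of_nonneg_left h1 hl.le
  have h5 : lam k * (-(a * D)) ≤ lam k * q := mul_le_mul_of_nonneg_left h3.1 hl.le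
  have hA' : 0 ≤ lam k * a := by positivity
  have key : (1 - σ ^ 2) * ((lam k * a) ^ 2 + B ^ 2) ≤ 2 * D * (lam k * a) := by
    linarith
  generalize lam k * a = A at *
  generalize 1 - σ ^ 2 = s at *
  rcases hA'.eq_or_lt with h0 | h0
  · subst h0
    have hB0 : B = 0 := by
      by_contra hne
      have : 0 < s * B ^ 2 := by positivity
      linarith
    subst hB0
    simpa using hD
  · have g1 : s * A ≤ 2 * D := by
      refine le_of_mul_le_mul_right ?_ h0
      have : 0 ≤ s * B ^ 2 := by positivity
      linarith
    have g2 : s * B ≤ D := by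
      refine le_of_mul_le_mul_right ?_ h0
      have : 0 ≤ s * (A - B) ^ 2 := by positivity
      linarith
    rcases max_choice A B with h | h <;> rw [h] <;> linarith
end

section
/- Consider the sequences generated by Algorithm 1. Under Assumption 3.2, the sequence (x_k − y_k) converges strongly to 0 in H, i.e. ‖x_k − y_k‖ → 0 as k → ∞. -/
open scoped RealInnerProductSpace
open Filter Topology

variable {H : Type*} [NormedAddCommGroup H] [InnerProductSpace ℝ H] [CompleteSpace H]

theorem proj_aux (a b : H) (h : ∀ t : ℝ, 0 ≤ t → t ≤ 1 → ‖a‖ ≤ ‖a + t • b‖) : 0 ≤ ⟪a, b⟫ := by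
  by_contra hs
  push Not at hs
  have hB : 0 ≤ ‖b‖ ^ 2 := by positivity
  set s : ℝ := ⟪a, b⟫ with hsd
  set B : ℝ := ‖b‖ ^ 2 with hBd
  have hpos : 0 < B - s := by linarith
  set t : ℝ := -s / (B - s) with ht
  have ht0 : 0 < t := div_pos (by linarith) hpos
  have ht1 : t ≤ 1 := by rw [ht, div_le_one hpos]; linarith
  have hts : t * (B - s) = -s := by rw [ht]; field_simp
  have h1 := h t ht0.le ht1
  have h2 : ‖a‖ ^ 2 ≤ ‖a + t • b‖ ^ 2 := by gcongr
  rw [norm_add_sq_real, inner_smul_right, norm_smul, mul_pow, ← hsd, ← hBd, Real.norm_eq_abs,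
    sq_abs] at h2
  have h3 : 0 ≤ t * (2 * s + t * B) := by nlinarith
  have h4 : 0 ≤ 2 * s + t * B := nonneg_of_mul_nonneg_right h3 ht0
  nlinarith

theorem err_aux (σ lam ε : ℝ) (hσ0 : 0 ≤ σ) (hσ1 : σ < 1) (hlam : 0 < lam)
    (v y wt z : H)
    (herr : ‖lam • v + y - wt‖ ^ 2 + 2 * lam * ε ≤
      σ ^ 2 * (‖lam • v‖ ^ 2 + ‖y - wt‖ ^ 2))
    (hz : ⟪z - y, v⟫ ≤ ε) : ‖y - wt‖ ≤ ‖wt - z‖ / (1 - σ ^ 2) := by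
  have hc : 0 < 1 - σ ^ 2 := by nlinarith
  have e1 : lam • v + y - wt = lam • v + (y - wt) := by abel
  rw [e1, norm_add_sq_real] at herr
  have hz' : ⟪lam • v, z - y⟫ ≤ lam * ε := by
    rw [real_inner_smul_left, real_inner_comm]
    exact mul_le_mul_of_nonneg_left hz hlam.le
  have h2 : ⟪lam • v, y - wt⟫ = - ⟪lam • v, wt - z⟫ - ⟪lam • v, z - y⟫ := by
    rw [← inner_neg_right, ← inner_sub_right]; congr 1; abel
  have h3 := real_inner_le_norm (lam • v) (wt - z)
  set P := ‖lam • v‖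
  set Q := ‖y - wt‖ with hQ
  set D := ‖wt - z‖ with hD
  set c := 1 - σ ^ 2 with hcd
  have h4 : c * (P ^ 2 + Q ^ 2) ≤ 2 * (P * D) := by
    have : σ ^ 2 = 1 - c := by rw [hcd]; ring
    rw [this] at herr
    nlinarith
  rw [le_div_iff₀ hc]
  have hQ0 : 0 ≤ Q := norm_nonneg _
  have hD0 : 0 ≤ D := norm_nonneg _
  refine abs_le_of_sq_le_sq' ?_ hD0 |>.2
  nlinarith [sq_nonneg (c * P - D), mul_le_mul_of_nonneg_left h4 hc.le]

/-- Proposition 3.3(c): x_k − y_k → 0 strongly. -/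
theorem stmt8
    (T : H → Set H) (hT : IsMaxMonotoneOp T)
    (hS : {z : H | (0 : H) ∈ T z}.Nonempty)
    (σ : ℝ) (hσ0 : 0 ≤ σ) (hσ1 : σ < 1)
    (α β lam ε : ℕ → ℝ)
    (hα : ∀ k, 0 ≤ α k) (hβ : ∀ k, 0 ≤ β k)
    (hlam : ∀ k, 0 < lam k) (hε : ∀ k, 0 ≤ ε k)
    (x w wt y v : ℕ → H)
    (hw : ∀ k, w k = x k + α k • (x k - x (k - 1)))
    (hwt : ∀ k, wt k = w k + β k • (w k - x 0))
    (hincl : ∀ k, v k ∈ enl T (ε k) (y k))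
    (herr : ∀ k, ‖lam k • v k + y k - wt k‖ ^ 2 + 2 * lam k * ε k ≤
      σ ^ 2 * (‖lam k • v k‖ ^ 2 + ‖y k - wt k‖ ^ 2))
    (hmem : ∀ k, ⟪x (k + 1) - y k, v k⟫ ≤ ε k ∧ ⟪x (k + 1) - x k, x 0 - x k⟫ ≤ 0)
    (hproj : ∀ k, ∀ z : H, ⟪z - y k, v k⟫ ≤ ε k → ⟪z - x k, x 0 - x k⟫ ≤ 0 →
      ‖x (k + 1) - x 0‖ ≤ ‖z - x 0‖)
    (habdd : BddAbove (Set.range α)) (hbbdd : BddAbove (Set.range β))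
    (hsum : Summable fun k => β k ^ 2) :
    Tendsto (fun k => x k - y k) atTop (𝓝 0) := by
  obtain ⟨p, hp⟩ := hS
  have hpH : ∀ k, ⟪p - y k, v k⟫ ≤ ε k := by
    intro k
    have h := hincl k p 0 hp
    rw [zero_sub, inner_neg_left, real_inner_comm] at h
    linarith
  have hpW : ∀ k, ⟪p - x k, x 0 - x k⟫ ≤ 0 := by
    intro k
    induction k with
    | zero => simp
    | succ k ih =>
      have := proj_aux (x (k + 1) - x 0) (p - x (k + 1)) (by
        intro t ht0 ht1
        have h := hproj k (x (k + 1) + t • (p - x (k + 1))) (by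
          have e : x (k + 1) + t • (p - x (k + 1)) - y k
            = (1 - t) • (x (k + 1) - y k) + t • (p - y k) := by module
          rw [e, inner_add_left, real_inner_smul_left, real_inner_smul_left]
          nlinarith [(hmem k).1, hpH k]) (by
          have e : x (k + 1) + t • (p - x (k + 1)) - x k
            = (1 - t) • (x (k + 1) - x k) + t • (p - x k) := by module
          rw [e, inner_add_left, real_inner_smul_left, real_inner_smul_left]
          nlinarith [(hmem k).2, ih])
        have e : x (k + 1) + t • (p - x (k + 1)) - x 0
          = x (k + 1) - x 0 + t • (p - x (k + 1)) := by abel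
        rwa [e] at h)
      rw [← neg_sub (x (k + 1)) (x 0), inner_neg_right, real_inner_comm]
      linarith
  have hbd : ∀ k, ‖x k - x 0‖ ≤ ‖p - x 0‖ := by
    intro k
    cases k with
    | zero => simp
    | succ k => exact hproj k p (hpH k) (hpW k)
  have hstep : ∀ k, ‖x (k + 1) - x k‖ ^ 2 ≤ ‖x (k + 1) - x 0‖ ^ 2 - ‖x k - x 0‖ ^ 2 := by
    intro k
    have e : x (k + 1) - x 0 = (x (k + 1) - x k) - (x 0 - x k) := by abel
    rw [e, norm_sub_sq_real (x (k + 1) - x k) (x 0 - x k), norm_sub_rev (x k) (x 0)]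
    linarith [(hmem k).2]
  have hmono : Monotone fun k => ‖x k - x 0‖ ^ 2 :=
    monotone_nat_of_le_succ fun k => by
      have := hstep k
      have := sq_nonneg ‖x (k + 1) - x k‖
      linarith
  have hbdd : BddAbove (Set.range fun k => ‖x k - x 0‖ ^ 2) := by
    refine ⟨‖p - x 0‖ ^ 2, ?_⟩
    rintro _ ⟨k, rfl⟩
    exact pow_le_pow_left₀ (norm_nonneg _) (hbd k) 2
  have hlim := tendsto_atTop_ciSup hmono hbdd
  have hd2 : Tendsto (fun k => ‖x (k + 1) - x k‖ ^ 2) atTop (𝓝 0) := by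
    refine squeeze_zero (fun k => sq_nonneg _) hstep ?_
    simpa using ((tendsto_add_atTop_iff_nat 1).2 hlim).sub hlim
  have hd : Tendsto (fun k => ‖x (k + 1) - x k‖) atTop (𝓝 0) := by
    simpa [Real.sqrt_sq] using hd2.sqrt
  have hd' : Tendsto (fun k => ‖x k - x (k - 1)‖) atTop (𝓝 0) := by
    rw [← tendsto_add_atTop_iff_nat 1]
    simpa using hd
  have hβ0 : Tendsto β atTop (𝓝 0) := by
    have := hsum.tendsto_atTop_zero.sqrt
    simpa [Real.sqrt_sq, hβ] using this
  obtain ⟨A, hA⟩ := habdd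
  have hA' : ∀ k, α k ≤ A := fun k => hA ⟨k, rfl⟩
  have hwx : Tendsto (fun k => ‖w k - x k‖) atTop (𝓝 0) := by
    refine squeeze_zero (fun k => norm_nonneg _) (g := fun k => A * ‖x k - x (k - 1)‖) ?_
      (by simpa using hd'.const_mul A)
    intro k
    rw [hw k, add_sub_cancel_left, norm_smul, Real.norm_of_nonneg (hα k)]
    exact mul_le_mul_of_nonneg_right (hA' k) (norm_nonneg _)
  have hwtx : Tendsto (fun k => ‖wt k - x k‖) atTop (𝓝 0) := by
    refine squeeze_zero (fun k => norm_nonneg _)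
      (g := fun k => ‖w k - x k‖ + β k * (‖w k - x k‖ + ‖p - x 0‖)) ?_
      (by simpa using hwx.add (hβ0.mul (hwx.add_const ‖p - x 0‖)))
    intro k
    have e : wt k - x k = (w k - x k) + β k • ((w k - x k) + (x k - x 0)) := by
      rw [hwt k]; module
    rw [e]
    refine (norm_add_le _ _).trans ?_
    rw [norm_smul, Real.norm_of_nonneg (hβ k)]
    have h1 := norm_add_le (w k - x k) (x k - x 0)
    have h2 := mul_le_mul_of_nonneg_left (h1.trans (add_le_add_right (hbd k) _)) (hβ k)
    linarith
  rw [tendsto_zero_iff_norm_tendsto_zero]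
  refine squeeze_zero (fun k => norm_nonneg _)
    (g := fun k => ‖wt k - x k‖ + (‖wt k - x k‖ + ‖x (k + 1) - x k‖) / (1 - σ ^ 2)) ?_
    (by simpa using hwtx.add ((hwtx.add hd).div_const (1 - σ ^ 2)))
  intro k
  have h1 := err_aux σ (lam k) (ε k) hσ0 hσ1 (hlam k) (v k) (y k) (wt k) (x (k + 1))
    (herr k) (hmem k).1
  have hc : 0 < 1 - σ ^ 2 := by nlinarith
  have h2 : ‖wt k - x (k + 1)‖ ≤ ‖wt k - x k‖ + ‖x (k + 1) - x k‖ := by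
    have := norm_sub_le (wt k - x k) (x (k + 1) - x k)
    rwa [sub_sub_sub_cancel_right] at this
  have h3 : ‖x k - y k‖ ≤ ‖wt k - x k‖ + ‖y k - wt k‖ := by
    have := norm_add_le (wt k - x k) (y k - wt k)
    rw [norm_sub_rev (x k)]
    convert this using 2
    abel
  have h4 := div_le_div_of_nonneg_right h2 hc.le
  linarith
end

section
/- Consider the sequences generated by Algorithm 1, suppose Assumption 3.2 holds and suppose there exists λ̲ > 0 with λ_k ≥ λ̲ for all k ≥ 0. Then every weak sequential cluster point of (x_k) belongs to S := {x : 0 ∈ T(x)}: if a subsequence (x_{k_j}) converges weakly to some x̄ ∈ H (i.e. ⟨x_{k_j}, h⟩ → ⟨x̄, h⟩ for all h ∈ H), then 0 ∈ T(x̄). -/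
open scoped RealInnerProductSpace
open Filter Topology

variable {H : Type*} [NormedAddCommGroup H] [InnerProductSpace ℝ H] [CompleteSpace H]

/-- Variational inequality for the projection onto a convex set. -/
lemma proj_var (C : H → Prop) (p x0 s : H) (hs : ∀ t : ℝ, 0 < t → t ≤ 1 → C (p + t • (s - p)))
    (hp : ∀ z, C z → ‖p - x0‖ ≤ ‖z - x0‖) : ⟪s - p, x0 - p⟫ ≤ 0 := by
  by_contra hcon
  push Not at hcon
  have key : ∀ t : ℝ, 0 < t → t ≤ 1 → 2 * ⟪s - p, x0 - p⟫ ≤ t * ‖s - p‖ ^ 2 := by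
    intro t ht ht1
    have h1 := hp _ (hs t ht ht1)
    have h2 : ‖p - x0‖ ^ 2 ≤ ‖p + t • (s - p) - x0‖ ^ 2 := by gcongr
    have h3 : p + t • (s - p) - x0 = (p - x0) + t • (s - p) := by abel
    rw [h3, norm_add_sq_real, inner_smul_right, norm_smul, mul_pow, Real.norm_eq_abs, sq_abs,
      real_inner_comm, ← neg_sub x0 p, inner_neg_right] at h2
    have h4 : t * (2 * ⟪s - p, x0 - p⟫) ≤ t * (t * ‖s - p‖ ^ 2) := by nlinarith
    exact le_of_mul_le_mul_left h4 ht
  set a := ⟪s - p, x0 - p⟫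
  set N := ‖s - p‖ ^ 2
  have hN : 0 ≤ N := by positivity
  have h1 := key (min 1 (a / (N + 1))) (by positivity) (min_le_left _ _)
  have h2 : min 1 (a / (N + 1)) * N ≤ a / (N + 1) * N := by
    gcongr; exact min_le_right _ _
  have h3 : a / (N + 1) * N ≤ a := by
    rw [div_mul_eq_mul_div, div_le_iff₀ (by positivity)]; nlinarith
  linarith

/-- The relative error criterion plus membership in the half-space bound the residuals. -/
lemma resid (σ lam ε : ℝ) (hσ0 : 0 ≤ σ) (hσ1 : σ < 1) (hl : 0 < lam) (v y wt xp : H)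
    (herr : ‖lam • v + y - wt‖ ^ 2 + 2 * lam * ε ≤ σ ^ 2 * (‖lam • v‖ ^ 2 + ‖y - wt‖ ^ 2))
    (hmem : ⟪xp - y, v⟫ ≤ ε) :
    ‖lam • v‖ ≤ 2 / (1 - σ ^ 2) * ‖xp - wt‖ ∧ ‖y - wt‖ ≤ 2 / (1 - σ ^ 2) * ‖xp - wt‖ ∧
    2 * lam * ε ≤ ‖lam • v‖ ^ 2 + ‖y - wt‖ ^ 2 := by
  have hσ : 0 < 1 - σ ^ 2 := by nlinarith
  have h0 : lam • v + y - wt = lam • v + (y - wt) := by abel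
  have hh : ⟪xp - y, lam • v⟫ ≤ lam * ε := by
    rw [inner_smul_right]; gcongr
  have hE : 2 * lam * ε ≤ σ ^ 2 * (‖lam • v‖ ^ 2 + ‖y - wt‖ ^ 2) := by
    nlinarith [sq_nonneg ‖lam • v + y - wt‖]
  have h1 : xp - y = (xp - wt) - (y - wt) := by abel
  rw [h0, norm_add_sq_real] at herr
  rw [h1, inner_sub_left] at hh
  have hcomm := real_inner_comm (lam • v) (y - wt)
  have hcs := abs_le.1 (abs_real_inner_le_norm (xp - wt) (lam • v))
  have hA := norm_nonneg (lam • v)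
  have hB := norm_nonneg (y - wt)
  have hX := norm_nonneg (xp - wt)
  generalize ‖lam • v‖ = A at *
  generalize ‖y - wt‖ = B at *
  generalize ‖xp - wt‖ = e at *
  have hm : (1 - σ ^ 2) * (A ^ 2 + B ^ 2) ≤ 2 * e * A := by
    nlinarith [hcs.1]
  have hc : 0 < 2 / (1 - σ ^ 2) := by positivity
  have hm2 : A ^ 2 + B ^ 2 ≤ (2 / (1 - σ ^ 2) * e) * A := by
    have : (2 / (1 - σ ^ 2) * e) * A = (2 * e * A) / (1 - σ ^ 2) := by ring
    rw [this, le_div_iff₀ hσ]; linarith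
  have hc0 : 0 ≤ 2 / (1 - σ ^ 2) * e := by positivity
  generalize 2 / (1 - σ ^ 2) * e = c at *
  have hAc : A ≤ c := by
    by_contra h
    push Not at h
    nlinarith [sq_nonneg B]
  refine ⟨hAc, ?_, ?_⟩
  · have : B ^ 2 ≤ c ^ 2 := by nlinarith [sq_nonneg A]
    exact (abs_le_of_sq_le_sq' this (hA.trans hAc)).2
  · nlinarith [sq_nonneg A, sq_nonneg B]

/-- Corollary 3.4: every weak sequential cluster point of (x_k) is a zero of T. -/
theorem stmt9
    (T : H → Set H) (hT : IsMaxMonotoneOp T)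
    (hS : {z : H | (0 : H) ∈ T z}.Nonempty)
    (σ : ℝ) (hσ0 : 0 ≤ σ) (hσ1 : σ < 1)
    (α β lam ε : ℕ → ℝ)
    (hα : ∀ k, 0 ≤ α k) (hβ : ∀ k, 0 ≤ β k)
    (hlam : ∀ k, 0 < lam k) (hε : ∀ k, 0 ≤ ε k)
    (x w wt y v : ℕ → H)
    (hw : ∀ k, w k = x k + α k • (x k - x (k - 1)))
    (hwt : ∀ k, wt k = w k + β k • (w k - x 0))
    (hincl : ∀ k, v k ∈ enl T (ε k) (y k))
    (herr : ∀ k, ‖lam k • v k + y k - wt k‖ ^ 2 + 2 * lam k * ε k ≤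
      σ ^ 2 * (‖lam k • v k‖ ^ 2 + ‖y k - wt k‖ ^ 2))
    (hmem : ∀ k, ⟪x (k + 1) - y k, v k⟫ ≤ ε k ∧ ⟪x (k + 1) - x k, x 0 - x k⟫ ≤ 0)
    (hproj : ∀ k, ∀ z : H, ⟪z - y k, v k⟫ ≤ ε k → ⟪z - x k, x 0 - x k⟫ ≤ 0 →
      ‖x (k + 1) - x 0‖ ≤ ‖z - x 0‖)
    (habdd : BddAbove (Set.range α)) (hbbdd : BddAbove (Set.range β))
    (hsum : Summable fun k => β k ^ 2)
    (lamlb : ℝ) (hlamlb : 0 < lamlb) (hlam_lb : ∀ k, lamlb ≤ lam k)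
    (φ : ℕ → ℕ) (hφ : StrictMono φ) (xbar : H)
    (hweak : ∀ h : H, Tendsto (fun j => ⟪x (φ j), h⟫) atTop (𝓝 ⟪xbar, h⟫)) :
    (0 : H) ∈ T xbar := by
  obtain ⟨s, hs⟩ := hS
  have hs : (0 : H) ∈ T s := hs
  have hsH : ∀ k, ⟪s - y k, v k⟫ ≤ ε k := by
    intro k
    have := hincl k s 0 hs
    rw [zero_sub, inner_neg_left, real_inner_comm] at this
    linarith
  have hsW : ∀ k, ⟪s - x k, x 0 - x k⟫ ≤ 0 := by
    intro k
    induction k with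
    | zero => simp
    | succ k ih =>
      refine proj_var (fun z => ⟪z - y k, v k⟫ ≤ ε k ∧ ⟪z - x k, x 0 - x k⟫ ≤ 0)
        (x (k + 1)) (x 0) s ?_ (fun z hz => hproj k z hz.1 hz.2)
      intro t ht ht1
      have e1 : ∀ a : H, x (k + 1) + t • (s - x (k + 1)) - a =
          (1 - t) • (x (k + 1) - a) + t • (s - a) := by intro a; module
      have h1 := hmem k
      have h2 := hsH k
      refine ⟨?_, ?_⟩
      · rw [e1, inner_add_left, real_inner_smul_left, real_inner_smul_left]
        nlinarith [h1.1]
      · rw [e1, inner_add_left, real_inner_smul_left, real_inner_smul_left]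
        nlinarith [h1.2]
  set D := ‖s - x 0‖ with hD
  have hbd : ∀ k, ‖x k - x 0‖ ≤ D := by
    intro k
    cases k with
    | zero => simp [hD]
    | succ k => exact hproj k s (hsH k) (hsW k)
  have hinc : ∀ k, ‖x (k + 1) - x k‖ ^ 2 ≤ ‖x (k + 1) - x 0‖ ^ 2 - ‖x k - x 0‖ ^ 2 := by
    intro k
    have e : x (k + 1) - x 0 = (x (k + 1) - x k) - (x 0 - x k) := by abel
    rw [e, norm_sub_sq_real (x (k + 1) - x k), norm_sub_rev (x 0) (x k)]
    linarith [(hmem k).2]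
  have hmono : Monotone fun k => ‖x k - x 0‖ ^ 2 :=
    monotone_nat_of_le_succ fun k => by nlinarith [hinc k, sq_nonneg ‖x (k + 1) - x k‖]
  have hbb : BddAbove (Set.range fun k => ‖x k - x 0‖ ^ 2) := by
    refine ⟨D ^ 2, ?_⟩
    rintro _ ⟨k, rfl⟩
    have := hbd k
    dsimp only
    gcongr
  have hconv := tendsto_atTop_ciSup hmono hbb
  have hdiff : Tendsto (fun k => ‖x (k + 1) - x k‖ ^ 2) atTop (𝓝 0) := by
    refine squeeze_zero (fun k => sq_nonneg _) hinc ?_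
    have := (hconv.comp (tendsto_add_atTop_nat 1)).sub hconv
    rw [sub_self] at this
    exact this
  have hd : Tendsto (fun k => ‖x (k + 1) - x k‖) atTop (𝓝 0) := by
    have := hdiff.sqrt
    simpa [Real.sqrt_sq] using this
  have hd' : Tendsto (fun k => ‖x k - x (k - 1)‖) atTop (𝓝 0) := by
    rw [← tendsto_add_atTop_iff_nat 1]
    simpa using hd
  obtain ⟨A, hA⟩ := habdd
  have hA : ∀ k, α k ≤ A := fun k => hA ⟨k, rfl⟩
  have hwx : Tendsto (fun k => ‖w k - x k‖) atTop (𝓝 0) := by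
    refine squeeze_zero (fun k => norm_nonneg _) (fun k => ?_)
      (by simpa using hd'.const_mul A)
    rw [hw k, add_sub_cancel_left, norm_smul, Real.norm_eq_abs, abs_of_nonneg (hα k)]
    gcongr
    exact hA k
  have hβ0 : Tendsto β atTop (𝓝 0) := by
    have := hsum.tendsto_atTop_zero.sqrt
    simpa [Real.sqrt_sq, hβ] using this
  have hwtx : Tendsto (fun k => ‖wt k - x k‖) atTop (𝓝 0) := by
    have hl : Tendsto (fun k => ‖w k - x k‖ + β k * (‖w k - x k‖ + D)) atTop (𝓝 0) := by
      simpa using hwx.add (hβ0.mul (hwx.add_const D))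
    refine squeeze_zero (fun k => norm_nonneg _) (fun k => ?_) hl
    have e : wt k - x k = (w k - x k) + β k • ((w k - x k) + (x k - x 0)) := by
      rw [hwt k]; module
    rw [e]
    refine (norm_add_le _ _).trans ?_
    rw [norm_smul, Real.norm_eq_abs, abs_of_nonneg (hβ k)]
    have := (norm_add_le (w k - x k) (x k - x 0)).trans (add_le_add_right (hbd k) _)
    have := hβ k
    gcongr
  have he : Tendsto (fun k => 2 / (1 - σ ^ 2) * ‖x (k + 1) - wt k‖) atTop (𝓝 0) := by
    have hl : Tendsto (fun k => ‖x (k + 1) - x k‖ + ‖wt k - x k‖) atTop (𝓝 0) := by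
      simpa using hd.add hwtx
    have h2 : Tendsto (fun k => ‖x (k + 1) - wt k‖) atTop (𝓝 0) := by
      refine squeeze_zero (fun k => norm_nonneg _) (fun k => ?_) hl
      have e : x (k + 1) - wt k = (x (k + 1) - x k) - (wt k - x k) := by abel
      rw [e]
      exact norm_sub_le _ _
    simpa using h2.const_mul (2 / (1 - σ ^ 2))
  have hres := fun k => resid σ (lam k) (ε k) hσ0 hσ1 (hlam k) (v k) (y k) (wt k) (x (k + 1))
    (herr k) (hmem k).1
  have hlv : Tendsto (fun k => ‖lam k • v k‖) atTop (𝓝 0) :=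
    squeeze_zero (fun k => norm_nonneg _) (fun k => (hres k).1) he
  have hyw : Tendsto (fun k => ‖y k - wt k‖) atTop (𝓝 0) :=
    squeeze_zero (fun k => norm_nonneg _) (fun k => (hres k).2.1) he
  have hv : Tendsto (fun k => ‖v k‖) atTop (𝓝 0) := by
    refine squeeze_zero (fun k => norm_nonneg _) (fun k => ?_)
      (by simpa using hlv.div_const lamlb)
    rw [le_div_iff₀ hlamlb, norm_smul, Real.norm_eq_abs, abs_of_pos (hlam k), mul_comm]
    have := hlam_lb k
    gcongr
  have hε0 : Tendsto ε atTop (𝓝 0) := by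
    have hl : Tendsto (fun k => (‖lam k • v k‖ ^ 2 + ‖y k - wt k‖ ^ 2) / (2 * lamlb))
        atTop (𝓝 0) := by
      simpa using ((hlv.pow 2).add (hyw.pow 2)).div_const (2 * lamlb)
    refine squeeze_zero hε (fun k => ?_) hl
    rw [le_div_iff₀ (by positivity)]
    nlinarith [(hres k).2.2, mul_le_mul_of_nonneg_right (hlam_lb k) (hε k)]
  have hyx : Tendsto (fun k => ‖y k - x k‖) atTop (𝓝 0) := by
    have hl : Tendsto (fun k => ‖y k - wt k‖ + ‖wt k - x k‖) atTop (𝓝 0) := by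
      simpa using hyw.add hwtx
    refine squeeze_zero (fun k => norm_nonneg _) (fun k => ?_) hl
    rw [← sub_add_sub_cancel (y k) (wt k) (x k)]
    exact norm_add_le _ _
  refine hT.2 xbar 0 fun z u hu => ?_
  rw [sub_zero]
  have hb : ∀ k, -(⟪u, z⟫ - ⟪x k, u⟫) ≤
      ε k + ‖u‖ * ‖y k - x k‖ + ‖v k‖ * (‖z - x 0‖ + D + ‖y k - x k‖) := by
    intro k
    have h1 := hincl k z u hu
    have e : ⟪u - v k, z - y k⟫ = ⟪u, z⟫ - ⟪x k, u⟫ - ⟪u, y k - x k⟫ - ⟪v k, z - y k⟫ := by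
      rw [real_inner_comm u (x k)]
      simp only [inner_sub_left, inner_sub_right]
      ring
    rw [e] at h1
    have h2 := abs_le.1 (abs_real_inner_le_norm u (y k - x k))
    have h3 := abs_le.1 (abs_real_inner_le_norm (v k) (z - y k))
    have h4 : ‖z - y k‖ ≤ ‖z - x 0‖ + D + ‖y k - x k‖ := by
      have e2 : z - y k = (z - x 0) - (x k - x 0) - (y k - x k) := by abel
      rw [e2]
      refine (norm_sub_le _ _).trans ?_
      have := norm_sub_le (z - x 0) (x k - x 0)
      linarith [hbd k]
    have h5 := mul_le_mul_of_nonneg_left h4 (norm_nonneg (v k))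
    linarith [h2.1, h3.1]
  have hR : Tendsto (fun k => ε k + ‖u‖ * ‖y k - x k‖ +
      ‖v k‖ * (‖z - x 0‖ + D + ‖y k - x k‖)) atTop (𝓝 0) := by
    simpa using (hε0.add (hyx.const_mul ‖u‖)).add (hv.mul (hyx.const_add (‖z - x 0‖ + D)))
  have hL : Tendsto (fun j => -(⟪u, z⟫ - ⟪x (φ j), u⟫)) atTop (𝓝 (-(⟪u, z⟫ - ⟪xbar, u⟫))) :=
    ((hweak u).const_sub _).neg
  have := le_of_tendsto_of_tendsto' hL (hR.comp hφ.tendsto_atTop) (fun j => hb (φ j))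
  rw [inner_sub_right, real_inner_comm xbar u]
  linarith
end

section
/- (Strong convergence of Algorithm 1.) Consider the sequences generated by Algorithm 1, suppose Assumption 3.2 holds and suppose there exists λ̲ > 0 with λ_k ≥ λ̲ for all k ≥ 0. Let x* be the point of S = {x : 0 ∈ T(x)} satisfying ‖x* − x₀‖ ≤ ‖z − x₀‖ for all z ∈ S (the orthogonal projection of x₀ onto S). Then (x_k) and (y_k) both converge strongly to x*: ‖x_k − x*‖ → 0 and ‖y_k − x*‖ → 0. -/
open scoped RealInnerProductSpace
open Filter Topology

variable {H : Type*} [NormedAddCommGroup H] [InnerProductSpace ℝ H] [CompleteSpace H]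

/-- Variational inequality from minimality along a segment. -/
lemma inner_le_zero_of_seg {H : Type*} [NormedAddCommGroup H] [InnerProductSpace ℝ H]
    (a z p : H) (h : ∀ t : ℝ, 0 ≤ t → t ≤ 1 → ‖a - p‖ ≤ ‖a + t • (z - a) - p‖) :
    ⟪z - a, p - a⟫ ≤ 0 := by
  by_contra hc
  push Not at hc
  set c := ⟪z - a, p - a⟫ with hcdef
  set n := ‖z - a‖ ^ 2 with hn
  have hn0 : 0 ≤ n := by positivity
  have key : ∀ t : ℝ, 0 ≤ t → t ≤ 1 → 0 ≤ t * (t * n - 2 * c) := by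
    intro t h0 h1
    have h2 := pow_le_pow_left₀ (norm_nonneg _) (h t h0 h1) 2
    have e : a + t • (z - a) - p = t • (z - a) - (p - a) := by abel
    rw [e, norm_sub_sq_real (t • (z - a)), norm_smul, real_inner_smul_left, mul_pow, Real.norm_eq_abs, sq_abs,
      norm_sub_rev p a] at h2
    nlinarith
  have ht : 0 < c / (n + c) := by positivity
  have h1 : c / (n + c) ≤ 1 := by rw [div_le_one (by positivity)]; linarith
  have h3 := key _ ht.le h1
  have h4 : c / (n + c) * n ≤ c := by
    rw [div_mul_eq_mul_div, div_le_iff₀ (by positivity)]; nlinarith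
  nlinarith

/-- Bounded sequences have weak limits along ultrafilters. -/
lemma exists_weak_limit {H : Type*} [NormedAddCommGroup H] [InnerProductSpace ℝ H]
    [CompleteSpace H] (x : ℕ → H) (M : ℝ) (hM : ∀ k, ‖x k‖ ≤ M) (U : Ultrafilter ℕ) :
    ∃ z : H, ∀ h : H, Tendsto (fun k => ⟪x k, h⟫) U (𝓝 ⟪z, h⟫) := by
  let f : ℕ → WeakDual ℝ H := fun k =>
    StrongDual.toWeakDual (InnerProductSpace.toDual ℝ H (x k))
  have hc := WeakDual.isCompact_closedBall (𝕜 := ℝ) (E := H) 0 M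
  have hmem : (U.map f : Filter (WeakDual ℝ H)) ≤
      𝓟 (WeakDual.toStrongDual ⁻¹' Metric.closedBall 0 M) := by
    rw [le_principal_iff]
    refine Filter.mem_map.2 (Filter.univ_mem' fun k => ?_)
    simp [f, hM k]
  obtain ⟨φ, -, hφ⟩ := hc.ultrafilter_le_nhds (U.map f) hmem
  refine ⟨(InnerProductSpace.toDual ℝ H).symm (WeakDual.toStrongDual φ), fun h => ?_⟩
  have ht : Tendsto f U (𝓝 φ) := hφ
  have h2 := ((WeakDual.eval_continuous h).tendsto φ).comp ht
  have e : ⟪(InnerProductSpace.toDual ℝ H).symm (WeakDual.toStrongDual φ), h⟫ = φ h := by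
    rw [InnerProductSpace.toDual_symm_apply]; rfl
  rw [e]
  exact h2

/-- Theorem 3.5 (strong convergence of Algorithm 1): x_k → x* and y_k → x*, the projection of x₀ onto S. -/
theorem stmt10
    (T : H → Set H) (hT : IsMaxMonotoneOp T)
    (hS : {z : H | (0 : H) ∈ T z}.Nonempty)
    (σ : ℝ) (hσ0 : 0 ≤ σ) (hσ1 : σ < 1)
    (α β lam ε : ℕ → ℝ)
    (hα : ∀ k, 0 ≤ α k) (hβ : ∀ k, 0 ≤ β k)
    (hlam : ∀ k, 0 < lam k) (hε : ∀ k, 0 ≤ ε k)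
    (x w wt y v : ℕ → H)
    (hw : ∀ k, w k = x k + α k • (x k - x (k - 1)))
    (hwt : ∀ k, wt k = w k + β k • (w k - x 0))
    (hincl : ∀ k, v k ∈ enl T (ε k) (y k))
    (herr : ∀ k, ‖lam k • v k + y k - wt k‖ ^ 2 + 2 * lam k * ε k ≤
      σ ^ 2 * (‖lam k • v k‖ ^ 2 + ‖y k - wt k‖ ^ 2))
    (hmem : ∀ k, ⟪x (k + 1) - y k, v k⟫ ≤ ε k ∧ ⟪x (k + 1) - x k, x 0 - x k⟫ ≤ 0)
    (hproj : ∀ k, ∀ z : H, ⟪z - y k, v k⟫ ≤ ε k → ⟪z - x k, x 0 - x k⟫ ≤ 0 →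
      ‖x (k + 1) - x 0‖ ≤ ‖z - x 0‖)
    (habdd : BddAbove (Set.range α)) (hbbdd : BddAbove (Set.range β))
    (hsum : Summable fun k => β k ^ 2)
    (lamlb : ℝ) (hlamlb : 0 < lamlb) (hlam_lb : ∀ k, lamlb ≤ lam k)
    (xstar : H) (hxstarS : (0 : H) ∈ T xstar)
    (hxstar : ∀ z : H, (0 : H) ∈ T z → ‖xstar - x 0‖ ≤ ‖z - x 0‖) :
    Tendsto x atTop (𝓝 xstar) ∧ Tendsto y atTop (𝓝 xstar) := by
  -- the solution set is contained in the half-spaces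
  have hH : ∀ k z, (0 : H) ∈ T z → ⟪z - y k, v k⟫ ≤ ε k := by
    intro k z hz
    have h := hincl k z 0 hz
    rw [zero_sub, inner_neg_left, real_inner_comm] at h
    linarith
  have hW : ∀ k z, (0 : H) ∈ T z → ⟪z - x k, x 0 - x k⟫ ≤ 0 := by
    intro k
    induction k with
    | zero => intro z _; simp
    | succ k ih =>
      intro z hz
      apply inner_le_zero_of_seg
      intro t h0 h1
      apply hproj k
      · have e : x (k + 1) + t • (z - x (k + 1)) - y k
            = (1 - t) • (x (k + 1) - y k) + t • (z - y k) := by module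
        rw [e, inner_add_left, real_inner_smul_left, real_inner_smul_left]
        nlinarith [(hmem k).1, hH k z hz]
      · have e : x (k + 1) + t • (z - x (k + 1)) - x k
            = (1 - t) • (x (k + 1) - x k) + t • (z - x k) := by module
        rw [e, inner_add_left, real_inner_smul_left, real_inner_smul_left]
        nlinarith [(hmem k).2, ih z hz]
  set D := ‖xstar - x 0‖ with hD
  have hD0 : 0 ≤ D := norm_nonneg _
  have hbd : ∀ k, ‖x k - x 0‖ ≤ D := by
    intro k
    cases k with
    | zero => simpa using hD0
    | succ k => exact hproj k xstar (hH k _ hxstarS) (hW k _ hxstarS)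
  have hstep : ∀ k, ‖x k - x 0‖ ^ 2 + ‖x (k + 1) - x k‖ ^ 2 ≤ ‖x (k + 1) - x 0‖ ^ 2 := by
    intro k
    have e : x (k + 1) - x 0 = (x (k + 1) - x k) - (x 0 - x k) := by abel
    rw [e, norm_sub_sq_real (x (k + 1) - x k), norm_sub_rev (x 0) (x k)]
    linarith [(hmem k).2]
  have hmono : Monotone fun k => ‖x k - x 0‖ ^ 2 :=
    monotone_nat_of_le_succ fun k => by nlinarith [hstep k, sq_nonneg ‖x (k + 1) - x k‖]
  have hbdd2 : BddAbove (Set.range fun k => ‖x k - x 0‖ ^ 2) :=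
    ⟨D ^ 2, by rintro _ ⟨k, rfl⟩; exact pow_le_pow_left₀ (norm_nonneg _) (hbd k) 2⟩
  have hlim := tendsto_atTop_ciSup hmono hbdd2
  have hd2 : Tendsto (fun k => ‖x (k + 1) - x k‖ ^ 2) atTop (𝓝 0) := by
    have h1 := ((tendsto_add_atTop_iff_nat 1).2 hlim).sub hlim
    rw [sub_self] at h1
    exact squeeze_zero (fun k => sq_nonneg _) (fun k => by linarith [hstep k]) h1
  have sqz : ∀ f : ℕ → ℝ, (∀ k, 0 ≤ f k) → Tendsto (fun k => f k ^ 2) atTop (𝓝 0) →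
      Tendsto f atTop (𝓝 0) := by
    intro f hf h
    have h1 := (Real.continuous_sqrt.tendsto 0).comp h
    rw [Real.sqrt_zero] at h1
    refine h1.congr fun k => ?_
    simp [Real.sqrt_sq (hf k)]
  have hd : Tendsto (fun k => ‖x (k + 1) - x k‖) atTop (𝓝 0) := sqz _ (fun k => norm_nonneg _) hd2
  have hd' : Tendsto (fun k => ‖x k - x (k - 1)‖) atTop (𝓝 0) := by
    rw [← tendsto_add_atTop_iff_nat 1]
    simpa using hd
  have hβ0 : Tendsto β atTop (𝓝 0) := sqz _ hβ hsum.tendsto_atTop_zero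
  obtain ⟨A, hA⟩ := habdd
  have hA' : ∀ k, α k ≤ A := fun k => hA ⟨k, rfl⟩
  have hq : Tendsto (fun k => ‖α k • (x k - x (k - 1))‖) atTop (𝓝 0) := by
    have h1 := hd'.const_mul A
    rw [mul_zero] at h1
    refine squeeze_zero (fun k => norm_nonneg _) (fun k => ?_) h1
    rw [norm_smul, Real.norm_of_nonneg (hα k)]
    exact mul_le_mul_of_nonneg_right (hA' k) (norm_nonneg _)
  have hwx : Tendsto (fun k => ‖wt k - x k‖) atTop (𝓝 0) := by
    have h1 := hq.add (hβ0.mul (hq.const_add D))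
    rw [zero_mul, zero_add] at h1
    refine squeeze_zero (fun k => norm_nonneg _) (fun k => ?_) h1
    have e : wt k - x k = α k • (x k - x (k - 1))
        + β k • ((x k - x 0) + α k • (x k - x (k - 1))) := by
      rw [hwt, hw]; module
    rw [e]
    refine (norm_add_le _ _).trans ?_
    rw [norm_smul (β k), Real.norm_of_nonneg (hβ k)]
    have h3 : ‖(x k - x 0) + α k • (x k - x (k - 1))‖ ≤ D + ‖α k • (x k - x (k - 1))‖ :=
      (norm_add_le _ _).trans (by linarith [hbd k])
    linarith [mul_le_mul_of_nonneg_left h3 (hβ k)]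
  have hr : Tendsto (fun k => ‖wt k - x (k + 1)‖) atTop (𝓝 0) := by
    have h1 := hwx.add hd
    rw [zero_add] at h1
    refine squeeze_zero (fun k => norm_nonneg _) (fun k => ?_) h1
    rw [norm_sub_rev (x (k + 1)) (x k)]
    exact norm_sub_le_norm_sub_add_norm_sub _ _ _
  -- error estimates
  set c := (1 - σ ^ 2) / 2 with hc
  have hc0 : 0 < c := by rw [hc]; nlinarith
  have hkey : ∀ k, c * (‖lam k • v k‖ ^ 2 + ‖y k - wt k‖ ^ 2) ≤
      ‖wt k - x (k + 1)‖ * ‖lam k • v k‖ := by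
    intro k
    have h1 := herr k
    rw [add_sub_assoc, norm_add_sq_real] at h1
    have h2 := mul_le_mul_of_nonneg_left (hmem k).1 (hlam k).le
    have e : lam k * ⟪x (k + 1) - y k, v k⟫
        = - ⟪wt k - x (k + 1), lam k • v k⟫ - ⟪lam k • v k, y k - wt k⟫ := by
      rw [real_inner_comm (y k - wt k) (lam k • v k), ← real_inner_smul_right, ← inner_neg_left,
        ← inner_sub_left]
      congr 1
      abel
    have h3 := real_inner_le_norm (wt k - x (k + 1)) (lam k • v k)
    rw [hc]
    nlinarith
  have ha : Tendsto (fun k => ‖lam k • v k‖) atTop (𝓝 0) := by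
    have h1 := hr.div_const c
    rw [zero_div] at h1
    refine squeeze_zero (fun k => norm_nonneg _) (fun k => ?_) h1
    rw [le_div_iff₀ hc0]
    have h2 := hkey k
    rcases (norm_nonneg (lam k • v k)).eq_or_lt with h0 | h0
    · rw [← h0]; simp
    · refine le_of_mul_le_mul_right ?_ h0
      nlinarith [mul_nonneg hc0.le (sq_nonneg ‖y k - wt k‖)]
  have hsq : Tendsto (fun k => ‖lam k • v k‖ ^ 2 + ‖y k - wt k‖ ^ 2) atTop (𝓝 0) := by
    have h1 := (hr.mul ha).div_const c
    rw [zero_mul, zero_div] at h1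
    refine squeeze_zero (fun k => by positivity) (fun k => ?_) h1
    rw [le_div_iff₀ hc0]
    linarith [hkey k]
  have hb : Tendsto (fun k => ‖y k - wt k‖) atTop (𝓝 0) := by
    refine sqz _ (fun k => norm_nonneg _) ?_
    exact squeeze_zero (fun k => sq_nonneg _) (fun k => by nlinarith [sq_nonneg ‖lam k • v k‖]) hsq
  have hv : Tendsto (fun k => ‖v k‖) atTop (𝓝 0) := by
    have h1 := ha.div_const lamlb
    rw [zero_div] at h1
    refine squeeze_zero (fun k => norm_nonneg _) (fun k => ?_) h1
    rw [le_div_iff₀ hlamlb, norm_smul, Real.norm_of_nonneg (hlam k).le]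
    nlinarith [mul_le_mul_of_nonneg_right (hlam_lb k) (norm_nonneg (v k))]
  have heps : Tendsto ε atTop (𝓝 0) := by
    have h1 := hsq.div_const lamlb
    rw [zero_div] at h1
    refine squeeze_zero hε (fun k => ?_) h1
    rw [le_div_iff₀ hlamlb]
    have h2 := herr k
    have h3 := mul_le_mul_of_nonneg_right (hlam_lb k) (hε k)
    have h4 : σ ^ 2 ≤ 1 := by nlinarith
    have h5 : 0 ≤ ‖lam k • v k‖ ^ 2 + ‖y k - wt k‖ ^ 2 := by positivity
    have h6 := mul_le_mul_of_nonneg_right h4 h5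
    have h7 := mul_nonneg hlamlb.le (hε k)
    nlinarith [sq_nonneg ‖lam k • v k + y k - wt k‖]
  have hyx : Tendsto (fun k => y k - x k) atTop (𝓝 0) := by
    rw [tendsto_zero_iff_norm_tendsto_zero]
    have h1 := hb.add hwx
    rw [zero_add] at h1
    exact squeeze_zero (fun k => norm_nonneg _)
      (fun k => norm_sub_le_norm_sub_add_norm_sub _ _ _) h1
  have hv' : Tendsto v atTop (𝓝 0) := tendsto_zero_iff_norm_tendsto_zero.2 hv
  have hx : Tendsto x atTop (𝓝 xstar) := by
    rw [tendsto_iff_ultrafilter]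
    intro U hU
    have hxb : ∀ k, ‖x k‖ ≤ D + ‖x 0‖ := fun k => by
      have h := norm_add_le (x k - x 0) (x 0)
      rw [sub_add_cancel] at h
      linarith [hbd k]
    obtain ⟨z, hz⟩ := exists_weak_limit x (D + ‖x 0‖) hxb U
    have hzS : (0 : H) ∈ T z := by
      apply hT.2
      intro p u hu
      rw [sub_zero]
      -- the limit of the enlargement inequality
      have h1 : Tendsto (fun k => ⟪u, p⟫ - ⟪x k, u⟫ - ⟪u, y k - x k⟫ + ε k
          + ‖v k‖ * (‖p‖ + (D + ‖x 0‖) + ‖y k - x k‖)) U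
          (𝓝 (⟪u, p⟫ - ⟪z, u⟫ - ⟪u, (0 : H)⟫ + 0
            + 0 * (‖p‖ + (D + ‖x 0‖) + ‖(0 : H)‖))) := by
        have hyU := hyx.mono_left hU
        exact ((((tendsto_const_nhds.sub (hz u)).sub
          (tendsto_const_nhds.inner hyU)).add (heps.mono_left hU)).add
          ((hv.mono_left hU).mul (tendsto_const_nhds.add hyU.norm)))
      have h2 := ge_of_tendsto' h1 (b := 0) (fun k => by
        have h3 := hincl k p u hu
        have e : ⟪u - v k, p - y k⟫ = ⟪u, p⟫ - ⟪x k, u⟫ - ⟪u, y k - x k⟫ - ⟪v k, p - y k⟫ := by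
          rw [real_inner_comm u (x k)]
          simp only [inner_sub_left, inner_sub_right]
          ring
        have h4 := neg_le_of_abs_le (abs_real_inner_le_norm (v k) (p - y k))
        have h5 : ‖p - y k‖ ≤ ‖p‖ + (D + ‖x 0‖) + ‖y k - x k‖ := by
          have e2 : p - y k = p - x k - (y k - x k) := by abel
          rw [e2]
          have := norm_sub_le (p - x k) (y k - x k)
          have := norm_sub_le p (x k)
          linarith [hxb k]
        have h6 := mul_le_mul_of_nonneg_left h5 (norm_nonneg (v k))
        rw [e] at h3
        linarith)
      rw [inner_sub_right, real_inner_comm z u]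
      simpa using h2
    have hzz : ⟪z - xstar, x 0 - xstar⟫ ≤ 0 := by
      apply inner_le_zero_of_seg
      intro t h0 h1
      apply hxstar
      apply hT.2
      intro p u hu
      have h2 := hT.1 p z u 0 hu hzS
      have h3 := hT.1 p xstar u 0 hu hxstarS
      have e : p - (xstar + t • (z - xstar)) = (1 - t) • (p - xstar) + t • (p - z) := by module
      rw [e, inner_add_right, real_inner_smul_right, real_inner_smul_right]
      have := mul_nonneg h0 h2
      have := mul_nonneg (sub_nonneg.2 h1) h3
      linarith
    have h7 : Tendsto (fun k => 2 * (⟪x k, x 0 - xstar⟫ - ⟪xstar, x 0 - xstar⟫)) U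
        (𝓝 (2 * (⟪z, x 0 - xstar⟫ - ⟪xstar, x 0 - xstar⟫))) :=
      ((hz _).sub tendsto_const_nhds).const_mul 2
    have h8 : ∀ k, ‖x k - xstar‖ ^ 2 ≤ 2 * (⟪x k, x 0 - xstar⟫ - ⟪xstar, x 0 - xstar⟫) := by
      intro k
      have h9 := pow_le_pow_left₀ (norm_nonneg _) (hbd k) 2
      have e : x k - x 0 = (x k - xstar) - (x 0 - xstar) := by abel
      rw [e, norm_sub_sq_real, hD, norm_sub_rev xstar (x 0), inner_sub_left] at h9
      linarith
    have h10 : 2 * (⟪z, x 0 - xstar⟫ - ⟪xstar, x 0 - xstar⟫) = 0 := by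
      rw [inner_sub_left] at hzz
      have := ge_of_tendsto' h7 (fun k => (sq_nonneg _).trans (h8 k))
      linarith
    rw [h10] at h7
    have h11 : Tendsto (fun k => ‖x k - xstar‖ ^ 2) U (𝓝 0) :=
      squeeze_zero (fun k => sq_nonneg _) h8 h7
    have h12 := (Real.continuous_sqrt.tendsto 0).comp h11
    rw [Real.sqrt_zero] at h12
    rw [tendsto_iff_norm_sub_tendsto_zero]
    refine h12.congr fun k => ?_
    simp [Real.sqrt_sq (norm_nonneg _)]
  refine ⟨hx, ?_⟩
  have h := hyx.add hx
  rw [zero_add] at h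
  exact h.congr fun k => by abel
end

section
/- (One iteration of the inertial Korpelevich extragradient method is a σ-approximate proximal step for F + N_C.) Let σ ∈ (0,1), λ := σ/L, w̃ ∈ H, and set: w' := P_C(w̃); y := P_C(w̃ − λ F(w')); ỹ := P_C(w̃ − λ F(y)); q := (w̃ − ỹ)/λ − F(y); v := F(y) + q; ε := ⟨q, ỹ − y⟩. Then ε ≥ 0, q ∈ N_C^ε(y) (so that v ∈ F(y) + N_C^ε(y)), and ‖λv + y − w̃‖² + 2λε ≤ σ² ‖y − w̃‖². -/
open scoped RealInnerProductSpace

/-- Proposition 4.1 (one iteration): one step of the inertial Korpelevich extragradient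
method gives a σ-approximate proximal step for F + N_C. -/
theorem stmt12 {H : Type*} [NormedAddCommGroup H] [InnerProductSpace ℝ H]
    (C : Set H) (hCne : C.Nonempty) (hCcl : IsClosed C) (hCconv : Convex ℝ C)
    (F : H → H) (L : ℝ) (hL : 0 < L)
    (hmono : ∀ x ∈ C, ∀ y ∈ C, 0 ≤ ⟪F x - F y, x - y⟫)
    (hlip : ∀ x ∈ C, ∀ y ∈ C, ‖F x - F y‖ ≤ L * ‖x - y‖)
    (PC : H → H)
    (hPC : ∀ u : H, PC u ∈ C ∧ ∀ z ∈ C, ⟪u - PC u, z - PC u⟫ ≤ 0)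
    (σ lam : ℝ) (hσ0 : 0 < σ) (hσ1 : σ < 1) (hlam : lam = σ / L)
    (wt w' y yt q v : H) (ε : ℝ)
    (hw' : w' = PC wt)
    (hy : y = PC (wt - lam • F w'))
    (hyt : yt = PC (wt - lam • F y))
    (hq : q = (1 / lam) • (wt - yt) - F y)
    (hv : v = F y + q)
    (hε : ε = ⟪q, yt - y⟫) :
    0 ≤ ε ∧ (∀ z ∈ C, ⟪q, z - y⟫ ≤ ε) ∧
      ‖lam • v + y - wt‖ ^ 2 + 2 * lam * ε ≤ σ ^ 2 * ‖y - wt‖ ^ 2 := by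
  have hlp : 0 < lam := by rw [hlam]; positivity
  have hlL : lam * L = σ := by rw [hlam]; field_simp
  have hw'C : w' ∈ C := hw' ▸ (hPC wt).1
  have hyC : y ∈ C := hy ▸ (hPC _).1
  have hytC : yt ∈ C := hyt ▸ (hPC _).1
  have h1 : ⟪wt - w', y - w'⟫ ≤ 0 := by
    have := (hPC wt).2 y hyC
    rwa [← hw'] at this
  have h2 : ⟪wt - lam • F w' - y, yt - y⟫ ≤ 0 := by
    have := (hPC (wt - lam • F w')).2 yt hytC
    rwa [← hy] at this
  have hlq : lam • q = wt - lam • F y - yt := by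
    rw [hq, smul_sub, smul_smul, mul_one_div_cancel hlp.ne', one_smul]; abel
  have h3 : ∀ z ∈ C, ⟪q, z - yt⟫ ≤ 0 := by
    intro z hz
    have := (hPC (wt - lam • F y)).2 z hz
    rw [← hyt, ← hlq, real_inner_smul_left] at this
    exact nonpos_of_mul_nonpos_right this hlp
  refine ⟨?_, ?_, ?_⟩
  · have := h3 y hyC
    rw [← neg_sub yt y, inner_neg_right] at this
    linarith
  · intro z hz
    have := h3 z hz
    have e : z - y = (z - yt) + (yt - y) := by abel
    rw [e, inner_add_right]
    linarith
  · have e1 : lam • v + y - wt = -(yt - y) := by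
      rw [hv, smul_add, hlq]; abel
    have e2 : lam * ε = ⟪wt - lam • F w' - y, yt - y⟫ - ‖yt - y‖ ^ 2
        + ⟪lam • (F w' - F y), yt - y⟫ := by
      rw [hε, ← real_inner_smul_left, hlq, ← real_inner_self_eq_norm_sq, ← inner_sub_left,
        ← inner_add_left]
      congr 1
      rw [smul_sub]; abel
    have e3 := norm_sub_sq_real (lam • (F w' - F y)) (yt - y)
    have h4 : ‖lam • (F w' - F y)‖ ≤ σ * ‖w' - y‖ := by
      rw [norm_smul, Real.norm_of_nonneg hlp.le, ← hlL, mul_assoc]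
      exact mul_le_mul_of_nonneg_left (hlip w' hw'C y hyC) hlp.le
    have h5 : ‖lam • (F w' - F y)‖ ^ 2 ≤ σ ^ 2 * ‖w' - y‖ ^ 2 := by
      rw [← mul_pow]
      exact pow_le_pow_left₀ (norm_nonneg _) h4 2
    have h6 : ‖w' - y‖ ^ 2 ≤ ‖y - wt‖ ^ 2 := by
      have e := norm_sub_sq_real (wt - w') (y - w')
      rw [sub_sub_sub_cancel_right, norm_sub_rev wt y, norm_sub_rev y w'] at e
      nlinarith [sq_nonneg ‖wt - w'‖]
    have h7 := mul_le_mul_of_nonneg_left h6 (sq_nonneg σ)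
    rw [e1, norm_neg]
    nlinarith [sq_nonneg ‖lam • (F w' - F y) - (yt - y)‖]
end

section
/- (Strong convergence of Algorithm 2, the inertial Korpelevich extragradient method.) Assume the solution set S := {x ∈ C : ⟨F(x), z − x⟩ ≥ 0 for all z ∈ C} is nonempty and Assumption 3.2 holds on (α_k), (β_k). Consider the sequences generated by Algorithm 2 and let x* be the point of S satisfying ‖x* − x₀‖ ≤ ‖z − x₀‖ for all z ∈ S (the orthogonal projection of x₀ onto S; S is closed and convex). Then (x_k) and (y_k) converge strongly to x*. -/
open scoped RealInnerProductSpace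
open Filter Topology

variable {H : Type*} [NormedAddCommGroup H] [InnerProductSpace ℝ H] [CompleteSpace H]

lemma aux_var (a b : H) (h : ∀ t : ℝ, 0 < t → t ≤ 1 → ‖a‖ ≤ ‖a + t • b‖) : 0 ≤ ⟪a, b⟫ := by
  by_contra hneg
  push Not at hneg
  have key : ∀ t : ℝ, 0 < t → t ≤ 1 → 0 ≤ 2 * ⟪a, b⟫ + t * ‖b‖ ^ 2 := by
    intro t h0 h1
    have h2 := h t h0 h1
    have h3 : ‖a‖ ^ 2 ≤ ‖a + t • b‖ ^ 2 := by gcongr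
    rw [norm_add_sq_real, inner_smul_right, norm_smul, mul_pow, Real.norm_eq_abs, sq_abs] at h3
    have h4 : 0 ≤ t * (2 * ⟪a, b⟫ + t * ‖b‖ ^ 2) := by nlinarith
    exact nonneg_of_mul_nonneg_right h4 h0
  have hb : 0 < ‖b‖ ^ 2 + 1 := by positivity
  have hmin : 0 < min 1 (-⟪a, b⟫ / (‖b‖ ^ 2 + 1)) := lt_min one_pos (div_pos (by linarith) hb)
  have h1 := key _ hmin (min_le_left _ _)
  have h2 : min 1 (-⟪a, b⟫ / (‖b‖ ^ 2 + 1)) * (‖b‖ ^ 2 + 1) ≤ -⟪a, b⟫ := by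
    rw [← le_div_iff₀ hb]; exact min_le_right _ _
  nlinarith

lemma aux_weak (x : ℕ → H) (R : ℝ) (hx : ∀ k, ‖x k‖ ≤ R) (U : Ultrafilter ℕ) :
    ∃ p : H, ∀ h : H, Tendsto (fun k => ⟪x k, h⟫) U (𝓝 ⟪p, h⟫) := by
  let φ : ℕ → WeakDual ℝ H := fun k => StrongDual.toWeakDual (InnerProductSpace.toDual ℝ H (x k))
  have hc := WeakDual.isCompact_closedBall (𝕜 := ℝ) (0 : StrongDual ℝ H) R
  obtain ⟨g, -, hg⟩ := hc.ultrafilter_le_nhds (U.map φ) (by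
    rw [le_principal_iff]
    refine Filter.mem_map.2 (Filter.univ_mem' fun k => ?_)
    simp [φ]
    simpa using hx k)
  refine ⟨(InnerProductSpace.toDual ℝ H).symm (WeakDual.toStrongDual g), fun h => ?_⟩
  rw [InnerProductSpace.toDual_symm_apply]
  have h1 : Tendsto φ U (𝓝 g) := hg
  have h2 := ((WeakDual.eval_continuous (𝕜 := ℝ) h).tendsto g).comp h1
  exact h2

lemma aux_minty (C : Set H) (hCconv : Convex ℝ C) (F : H → H) (L : ℝ) (hL : 0 < L)
    (hlip : ∀ x ∈ C, ∀ y ∈ C, ‖F x - F y‖ ≤ L * ‖x - y‖) (p : H) (hp : p ∈ C)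
    (h : ∀ u ∈ C, 0 ≤ ⟪F u, u - p⟫) : ∀ u ∈ C, 0 ≤ ⟪F p, u - p⟫ := by
  intro u hu
  have key : ∀ t : ℝ, 0 < t → t ≤ 1 → 0 ≤ ⟪F p, u - p⟫ + t * (L * ‖u - p‖ ^ 2) := by
    intro t h0 h1
    have hm : p + t • (u - p) ∈ C := hCconv.add_smul_sub_mem hp hu ⟨h0.le, h1⟩
    have h2 := h _ hm
    rw [add_sub_cancel_left, inner_smul_right] at h2
    have h3 := nonneg_of_mul_nonneg_right h2 h0
    have h4 := hlip _ hm _ hp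
    rw [add_sub_cancel_left, norm_smul, Real.norm_eq_abs, abs_of_pos h0] at h4
    have h5 := real_inner_le_norm (F (p + t • (u - p)) - F p) (u - p)
    rw [inner_sub_left] at h5
    have h6 := mul_le_mul_of_nonneg_right h4 (norm_nonneg (u - p))
    nlinarith
  have ht : Tendsto (fun t : ℝ => ⟪F p, u - p⟫ + t * (L * ‖u - p‖ ^ 2)) (𝓝[>] 0)
      (𝓝 (⟪F p, u - p⟫ + 0 * (L * ‖u - p‖ ^ 2))) := by
    apply Tendsto.mono_left _ nhdsWithin_le_nhds
    exact Continuous.tendsto (by fun_prop) 0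
  rw [zero_mul, add_zero] at ht
  refine ge_of_tendsto ht ?_
  filter_upwards [Ioc_mem_nhdsGT (zero_lt_one' ℝ)] with t ht
  exact key t ht.1 ht.2

/-- Theorem 4.2(a): strong convergence of the inertial Korpelevich extragradient method. -/
theorem stmt13
    (C : Set H) (hCne : C.Nonempty) (hCcl : IsClosed C) (hCconv : Convex ℝ C)
    (F : H → H) (L : ℝ) (hL : 0 < L)
    (hmono : ∀ x ∈ C, ∀ y ∈ C, 0 ≤ ⟪F x - F y, x - y⟫)
    (hlip : ∀ x ∈ C, ∀ y ∈ C, ‖F x - F y‖ ≤ L * ‖x - y‖)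
    (PC : H → H)
    (hPC : ∀ u : H, PC u ∈ C ∧ ∀ z ∈ C, ⟪u - PC u, z - PC u⟫ ≤ 0)
    (σ lam : ℝ) (hσ0 : 0 < σ) (hσ1 : σ < 1) (hlam : lam = σ / L)
    (hS : {z : H | z ∈ C ∧ ∀ u ∈ C, 0 ≤ ⟪F z, u - z⟫}.Nonempty)
    (α β : ℕ → ℝ) (hα : ∀ k, 0 ≤ α k) (hβ : ∀ k, 0 ≤ β k)
    (x w wt w' y yt q v : ℕ → H) (ε : ℕ → ℝ)
    (hw : ∀ k, w k = x k + α k • (x k - x (k - 1)))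
    (hwt : ∀ k, wt k = w k + β k • (w k - x 0))
    (hw' : ∀ k, w' k = PC (wt k))
    (hy : ∀ k, y k = PC (wt k - lam • F (w' k)))
    (hyt : ∀ k, yt k = PC (wt k - lam • F (y k)))
    (hq : ∀ k, q k = (1 / lam) • (wt k - yt k) - F (y k))
    (hv : ∀ k, v k = F (y k) + q k)
    (hε : ∀ k, ε k = ⟪q k, yt k - y k⟫)
    (hmem : ∀ k, ⟪x (k + 1) - y k, v k⟫ ≤ ε k ∧ ⟪x (k + 1) - x k, x 0 - x k⟫ ≤ 0)
    (hproj : ∀ k, ∀ z : H, ⟪z - y k, v k⟫ ≤ ε k → ⟪z - x k, x 0 - x k⟫ ≤ 0 →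
      ‖x (k + 1) - x 0‖ ≤ ‖z - x 0‖)
    (habdd : BddAbove (Set.range α)) (hbbdd : BddAbove (Set.range β))
    (hsum : Summable fun k => β k ^ 2)
    (xstar : H) (hxstarS : xstar ∈ {z : H | z ∈ C ∧ ∀ u ∈ C, 0 ≤ ⟪F z, u - z⟫})
    (hxstar : ∀ z ∈ {z : H | z ∈ C ∧ ∀ u ∈ C, 0 ≤ ⟪F z, u - z⟫}, ‖xstar - x 0‖ ≤ ‖z - x 0‖) :
    Tendsto x atTop (𝓝 xstar) ∧ Tendsto y atTop (𝓝 xstar) := by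
  have hlam0 : 0 < lam := by rw [hlam]; positivity
  have hlamL : lam * L = σ := by rw [hlam]; field_simp
  have hyC : ∀ k, y k ∈ C := fun k => by rw [hy]; exact (hPC _).1
  have hytC : ∀ k, yt k ∈ C := fun k => by rw [hyt]; exact (hPC _).1
  have hw'C : ∀ k, w' k ∈ C := fun k => by rw [hw']; exact (hPC _).1
  have hlv : ∀ k, lam • v k = wt k - yt k := by
    intro k
    rw [hv, hq, add_sub_cancel, smul_smul, mul_one_div_cancel hlam0.ne', one_smul]
  have hlq : ∀ k, lam • q k = wt k - lam • F (y k) - yt k := by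
    intro k
    rw [hq, smul_sub, smul_smul, mul_one_div_cancel hlam0.ne', one_smul]; abel
  -- the solution set lies in every half-space
  have hSH : ∀ k, ⟪xstar - y k, v k⟫ ≤ ε k := by
    intro k
    have h1 := hmono _ (hyC k) _ hxstarS.1
    have h2 := hxstarS.2 _ (hyC k)
    have h3 := (hPC (wt k - lam • F (y k))).2 xstar hxstarS.1
    rw [← hyt, ← hlq, inner_smul_left] at h3
    have h4 : ⟪q k, xstar - yt k⟫ ≤ 0 := by
      by_contra hc
      push Not at hc
      have := mul_pos hlam0 hc
      simp at h3
      linarith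
    rw [hε, hv, real_inner_comm]
    simp only [inner_sub_left, inner_sub_right, inner_add_left] at *
    linarith
  have hSW : ∀ k, ⟪xstar - x k, x 0 - x k⟫ ≤ 0 := by
    intro k
    induction k with
    | zero => simp
    | succ k ih =>
      have := aux_var (x (k + 1) - x 0) (xstar - x (k + 1)) (by
        intro t h0 h1
        have h2 := hproj k (x (k + 1) + t • (xstar - x (k + 1))) (by
          have e : x (k + 1) + t • (xstar - x (k + 1)) - y k
              = (1 - t) • (x (k + 1) - y k) + t • (xstar - y k) := by module
          rw [e, inner_add_left, real_inner_smul_left, real_inner_smul_left]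
          nlinarith [(hmem k).1, hSH k]) (by
          have e : x (k + 1) + t • (xstar - x (k + 1)) - x k
              = (1 - t) • (x (k + 1) - x k) + t • (xstar - x k) := by module
          rw [e, inner_add_left, real_inner_smul_left, real_inner_smul_left]
          nlinarith [(hmem k).2, ih])
        convert h2 using 2
        abel)
      rw [real_inner_comm, ← neg_sub (x 0) (x (k + 1)), inner_neg_right] at this
      linarith
  have hdist : ∀ k, ‖xstar - x k‖ ^ 2 + ‖x k - x 0‖ ^ 2 ≤ ‖xstar - x 0‖ ^ 2 := by
    intro k
    have e : xstar - x 0 = (xstar - x k) - (x 0 - x k) := by abel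
    rw [e, norm_sub_sq_real (xstar - x k) (x 0 - x k), norm_sub_rev (x k) (x 0)]
    linarith [hSW k]
  have hstep : ∀ k, ‖x (k + 1) - x k‖ ^ 2 + ‖x k - x 0‖ ^ 2 ≤ ‖x (k + 1) - x 0‖ ^ 2 := by
    intro k
    have e : x (k + 1) - x 0 = (x (k + 1) - x k) - (x 0 - x k) := by abel
    rw [e, norm_sub_sq_real (x (k + 1) - x k) (x 0 - x k), norm_sub_rev (x k) (x 0)]
    linarith [(hmem k).2]
  have hbd : ∀ k, ‖x k - x 0‖ ≤ ‖xstar - x 0‖ := fun k =>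
    le_of_sq_le_sq (by nlinarith [hdist k, sq_nonneg ‖xstar - x k‖]) (norm_nonneg _)
  have hsumx : Summable fun k => ‖x (k + 1) - x k‖ ^ 2 := by
    refine summable_of_sum_range_le (c := ‖xstar - x 0‖ ^ 2) (fun k => by positivity) fun n => ?_
    have : ∑ i ∈ Finset.range n, ‖x (i + 1) - x i‖ ^ 2 ≤ ‖x n - x 0‖ ^ 2 := by
      induction n with
      | zero => simp
      | succ n ih => rw [Finset.sum_range_succ]; linarith [hstep n]
    refine this.trans ?_
    have := hbd n
    gcongr
  have sq0 : ∀ f : ℕ → ℝ, (∀ k, 0 ≤ f k) → Tendsto (fun k => f k ^ 2) atTop (𝓝 0) →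
      Tendsto f atTop (𝓝 0) := by
    intro f hf h
    have := h.sqrt
    simp only [Real.sqrt_zero] at this
    exact this.congr fun k => Real.sqrt_sq (hf k)
  have hx1 : Tendsto (fun k => ‖x (k + 1) - x k‖) atTop (𝓝 0) :=
    sq0 _ (fun k => norm_nonneg _) hsumx.tendsto_atTop_zero
  have hb0 : Tendsto β atTop (𝓝 0) := sq0 _ hβ hsum.tendsto_atTop_zero
  obtain ⟨A, hA⟩ := habdd
  have hA : ∀ k, α k ≤ A := fun k => hA ⟨k, rfl⟩
  have hx2 : Tendsto (fun k => ‖x k - x (k - 1)‖) atTop (𝓝 0) := by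
    rw [← tendsto_add_atTop_iff_nat 1]
    simpa using hx1
  have hwx : Tendsto (fun k => ‖w k - x k‖) atTop (𝓝 0) := by
    refine squeeze_zero (fun k => norm_nonneg _) (g := fun k => A * ‖x k - x (k - 1)‖) (fun k => ?_)
      (by simpa using hx2.const_mul A)
    rw [hw, add_sub_cancel_left, norm_smul, Real.norm_eq_abs, abs_of_nonneg (hα k)]
    gcongr
    exact hA k
  have hwtx : Tendsto (fun k => ‖wt k - x k‖) atTop (𝓝 0) := by
    refine squeeze_zero (fun k => norm_nonneg _)
      (g := fun k => ‖w k - x k‖ + β k * (‖w k - x k‖ + ‖xstar - x 0‖)) (fun k => ?_)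
      (by simpa using hwx.add (hb0.mul (hwx.add_const ‖xstar - x 0‖)))
    have e : wt k - x k = (w k - x k) + β k • ((w k - x k) + (x k - x 0)) := by
      rw [hwt]; module
    rw [e]
    refine (norm_add_le _ _).trans ?_
    rw [norm_smul, Real.norm_eq_abs, abs_of_nonneg (hβ k)]
    have h1 := norm_add_le (w k - x k) (x k - x 0)
    have h2 := hbd k
    have h3 := hβ k
    gcongr
    linarith
  have hwtx1 : Tendsto (fun k => ‖wt k - x (k + 1)‖) atTop (𝓝 0) := by
    refine squeeze_zero (fun k => norm_nonneg _)
      (g := fun k => ‖wt k - x k‖ + ‖x (k + 1) - x k‖) (fun k => ?_)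
      (by simpa using hwtx.add hx1)
    rw [norm_sub_rev (x (k + 1)) (x k)]
    exact norm_sub_le_norm_sub_add_norm_sub _ _ _
  have hw'y : ∀ k, ‖y k - w' k‖ ≤ ‖wt k - y k‖ := by
    intro k
    have h1 := (hPC (wt k)).2 _ (hyC k)
    rw [← hw'] at h1
    have e : wt k - y k = (wt k - w' k) - (y k - w' k) := by abel
    refine le_of_sq_le_sq ?_ (norm_nonneg _)
    rw [e, norm_sub_sq_real (wt k - w' k) (y k - w' k)]
    nlinarith [sq_nonneg ‖wt k - w' k‖]
  have hmain : ∀ k, (1 - σ) * ‖wt k - y k‖ ^ 2 ≤ ‖wt k - x (k + 1)‖ ^ 2 := by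
    intro k
    obtain ⟨a, ha⟩ : ∃ a, a = wt k - yt k := ⟨_, rfl⟩
    obtain ⟨b, hb⟩ : ∃ b, b = yt k - y k := ⟨_, rfl⟩
    obtain ⟨c, hc⟩ : ∃ c, c = wt k - x (k + 1) := ⟨_, rfl⟩
    have hab : wt k - y k = a + b := by rw [ha, hb]; abel
    have h1 := (hPC (wt k - lam • F (w' k))).2 _ (hytC k)
    rw [← hy, ← hb, show wt k - lam • F (w' k) - y k = (a + b) - lam • F (w' k) by
      rw [← hab]; abel, inner_sub_left, inner_add_left, real_inner_smul_left,
      real_inner_self_eq_norm_sq] at h1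
    have h2 : lam * ⟪x (k + 1) - y k, v k⟫ ≤ lam * ε k :=
      mul_le_mul_of_nonneg_left (hmem k).1 hlam0.le
    rw [hε, ← real_inner_smul_right, hlv, ← real_inner_smul_left, hlq, ← ha, ← hb,
      show wt k - lam • F (y k) - yt k = a - lam • F (y k) by rw [ha]; abel,
      show x (k + 1) - y k = (a + b) - c by rw [← hab, hc]; abel,
      inner_sub_left, inner_sub_left, inner_add_left, real_inner_smul_left,
      real_inner_self_eq_norm_sq, real_inner_comm a b] at h2
    have h3 : lam * (⟪F (w' k), b⟫ - ⟪F (y k), b⟫) ≤ σ * (‖a + b‖ * ‖b‖) := by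
      rw [← inner_sub_left]
      have h4 := hlip _ (hw'C k) _ (hyC k)
      have h5 := hw'y k
      rw [norm_sub_rev, hab] at h5
      calc lam * ⟪F (w' k) - F (y k), b⟫ ≤ lam * ((L * ‖a + b‖) * ‖b‖) := by
            gcongr
            refine (real_inner_le_norm _ _).trans ?_
            gcongr
            refine h4.trans ?_
            gcongr
        _ = _ := by rw [← hlamL]; ring
    have h6 := real_inner_le_norm c a
    have h7 := norm_add_sq_real a b
    rw [hab, ← hc]
    have h8 : σ * (‖a + b‖ * ‖b‖) ≤ σ * ((‖a + b‖ ^ 2 + ‖b‖ ^ 2) / 2) := by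
      gcongr
      nlinarith [sq_nonneg (‖a + b‖ - ‖b‖)]
    have h9 : σ * ‖b‖ ^ 2 ≤ ‖b‖ ^ 2 := by nlinarith [sq_nonneg ‖b‖]
    have h10 := real_inner_comm a b
    nlinarith [sq_nonneg (‖c‖ - ‖a‖)]
  have hwty : Tendsto (fun k => ‖wt k - y k‖) atTop (𝓝 0) := by
    refine sq0 _ (fun k => norm_nonneg _) ?_
    refine squeeze_zero (fun k => by positivity)
      (g := fun k => (1 - σ)⁻¹ * ‖wt k - x (k + 1)‖ ^ 2) (fun k => ?_)
      (by simpa using (hwtx1.pow 2).const_mul (1 - σ)⁻¹)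
    have : 0 < 1 - σ := by linarith
    rw [inv_mul_eq_div, le_div_iff₀ this, mul_comm]
    exact hmain k
  have hyx : Tendsto (fun k => y k - x k) atTop (𝓝 0) := by
    rw [tendsto_zero_iff_norm_tendsto_zero]
    refine squeeze_zero (fun k => norm_nonneg _)
      (g := fun k => ‖wt k - y k‖ + ‖wt k - x k‖) (fun k => ?_)
      (by simpa using hwty.add hwtx)
    rw [norm_sub_rev (wt k) (y k)]
    exact norm_sub_le_norm_sub_add_norm_sub _ _ _
  have hyb : ∃ B : ℝ, ∀ k, ‖y k - x k‖ ≤ B := by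
    obtain ⟨B, hB⟩ := hyx.norm.bddAbove_range
    exact ⟨B, fun k => hB ⟨k, rfl⟩⟩
  obtain ⟨B, hB⟩ := hyb
  -- approximate Minty inequality
  have hlow : ∀ u ∈ C, ∃ D : ℝ, ∀ k, -(D * ‖wt k - y k‖) ≤ ⟪F u, u - y k⟫ := by
    intro u hu
    refine ⟨(lam⁻¹ + L) * (‖u - x 0‖ + ‖xstar - x 0‖ + B), fun k => ?_⟩
    have hbu : ‖u - y k‖ ≤ ‖u - x 0‖ + ‖xstar - x 0‖ + B := by
      have e : u - y k = (u - x 0) - (x k - x 0) - (y k - x k) := by abel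
      rw [e]
      linarith [norm_sub_le ((u - x 0) - (x k - x 0)) (y k - x k),
        norm_sub_le (u - x 0) (x k - x 0), hB k, hbd k]
    have h1 := (hPC (wt k - lam • F (w' k))).2 _ hu
    rw [← hy, show wt k - lam • F (w' k) - y k = (wt k - y k) - lam • F (w' k) by abel,
      inner_sub_left, real_inner_smul_left] at h1
    have h2 := hmono _ hu _ (hyC k)
    rw [inner_sub_left] at h2
    have h3 := abs_le.1 (abs_real_inner_le_norm (wt k - y k) (u - y k))
    have h4 := real_inner_le_norm (F (w' k) - F (y k)) (u - y k)
    have h5 : ‖F (w' k) - F (y k)‖ ≤ L * ‖wt k - y k‖ := by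
      refine (hlip _ (hw'C k) _ (hyC k)).trans ?_
      gcongr
      rw [norm_sub_rev]
      exact hw'y k
    rw [inner_sub_left] at h4
    have h6 : -(lam⁻¹ * (‖wt k - y k‖ * ‖u - y k‖)) ≤ ⟪F (w' k), u - y k⟫ := by
      have h7 : -(‖wt k - y k‖ * ‖u - y k‖) ≤ lam * ⟪F (w' k), u - y k⟫ := by linarith [h3.1]
      have h8 := mul_le_mul_of_nonneg_left h7 (inv_pos.2 hlam0).le
      rw [← mul_assoc, inv_mul_cancel₀ hlam0.ne', one_mul] at h8
      linarith
    have h9 := mul_le_mul_of_nonneg_right h5 (norm_nonneg (u - y k))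
    have h10 : (lam⁻¹ + L) * ‖wt k - y k‖ * ‖u - y k‖ ≤
        (lam⁻¹ + L) * ‖wt k - y k‖ * (‖u - x 0‖ + ‖xstar - x 0‖ + B) := by
      gcongr
    linarith
  have hxlim : Tendsto x atTop (𝓝 xstar) := by
    rw [tendsto_iff_ultrafilter]
    intro U hU
    obtain ⟨p, hp⟩ := aux_weak x (‖xstar - x 0‖ + ‖x 0‖) (fun k => by
      have := norm_add_le (x k - x 0) (x 0)
      rw [sub_add_cancel] at this
      linarith [hbd k]) U
    have hpy : ∀ h : H, Tendsto (fun k => ⟪h, y k⟫) U (𝓝 ⟪h, p⟫) := by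
      intro h
      have h1 : Tendsto (fun k => ⟪y k - x k, h⟫) U (𝓝 0) := by
        simpa using (hyx.mono_left hU).inner (tendsto_const_nhds (x := h))
      have h2 := h1.add (hp h)
      simp only [zero_add, ← inner_add_left, sub_add_cancel] at h2
      simpa only [real_inner_comm] using h2
    have hpC : p ∈ C := by
      have h1 : Tendsto (fun k => ⟪p - PC p, y k - PC p⟫) U (𝓝 ⟪p - PC p, p - PC p⟫) := by
        simp only [inner_sub_right _ _ (PC p)]
        exact (hpy _).sub_const _
      have h2 := le_of_tendsto h1 (Eventually.of_forall fun k => (hPC p).2 _ (hyC k))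
      have h3 : p - PC p = 0 := by
        rw [real_inner_self_eq_norm_sq] at h2
        exact norm_eq_zero.1 (pow_eq_zero_iff two_ne_zero |>.1 (le_antisymm h2 (sq_nonneg _)))
      rw [sub_eq_zero.1 h3]
      exact (hPC p).1
    have hpS : ∀ u ∈ C, 0 ≤ ⟪F p, u - p⟫ := by
      refine aux_minty C hCconv F L hL hlip p hpC fun u hu => ?_
      obtain ⟨D, hD⟩ := hlow u hu
      have h1 : Tendsto (fun k => ⟪F u, u - y k⟫) U (𝓝 ⟪F u, u - p⟫) := by
        simp only [inner_sub_right]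
        exact (hpy _).const_sub _
      have h2 : Tendsto (fun k => -(D * ‖wt k - y k‖)) U (𝓝 0) := by
        simpa using ((hwty.mono_left hU).const_mul D).neg
      exact le_of_tendsto_of_tendsto h2 h1 (Eventually.of_forall hD)
    have hd := hxstar p ⟨hpC, hpS⟩
    have hd2 : ‖xstar - x 0‖ ^ 2 ≤ ‖p - x 0‖ ^ 2 := by gcongr
    have hup : ∀ k, ‖x k - xstar‖ ^ 2 ≤ 2 * ‖p - x 0‖ ^ 2 - 2 * ⟪x k - x 0, p - x 0⟫ := by
      intro k
      have h1 := hdist k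
      have h2 := norm_sub_sq_real (x k - x 0) (p - x 0)
      rw [norm_sub_rev] at h1
      nlinarith [sq_nonneg ‖x k - x 0 - (p - x 0)‖]
    have hlim : Tendsto (fun k => 2 * ‖p - x 0‖ ^ 2 - 2 * ⟪x k - x 0, p - x 0⟫) U (𝓝 0) := by
      have h1 : Tendsto (fun k => ⟪x k - x 0, p - x 0⟫) U (𝓝 ⟪p - x 0, p - x 0⟫) := by
        simp only [inner_sub_left _ _ (p - x 0)]
        exact (hp _).sub_const _
      have h2 := (h1.const_mul 2).const_sub (2 * ‖p - x 0‖ ^ 2)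
      rwa [real_inner_self_eq_norm_sq, sub_self] at h2
    have h1 := squeeze_zero (fun k => by positivity) hup hlim
    have h2 := h1.sqrt
    simp only [Real.sqrt_zero, Real.sqrt_sq (norm_nonneg _)] at h2
    exact tendsto_iff_norm_sub_tendsto_zero.2 h2
  refine ⟨hxlim, ?_⟩
  have := hyx.add hxlim
  simpa using this
end

section
/- (One iteration of the inertial Tseng forward-backward method is a σ-approximate proximal step for F + B.) Let σ ∈ (0,1), λ := σ/L and w̃ ∈ H. Set w' := P_C(w̃), let y ∈ H satisfy (w̃ − λ F(w') − y)/λ ∈ B(y) (i.e. y is the resolvent (λB + I)⁻¹(w̃ − λ F(w'))), and set v := F(y) − F(w') + (w̃ − y)/λ. Then v ∈ F(y) + B(y) and ‖λv + y − w̃‖ ≤ σ ‖y − w̃‖. -/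
open scoped RealInnerProductSpace
open Filter Topology

variable {H : Type*} [NormedAddCommGroup H] [InnerProductSpace ℝ H] [CompleteSpace H]

/-- Proposition 5.1: one iteration of the inertial Tseng forward-backward method is a
σ-approximate proximal step for F + B. -/
theorem stmt15
    (C : Set H) (hCne : C.Nonempty) (hCcl : IsClosed C) (hCconv : Convex ℝ C)
    (D : Set H) (hCD : C ⊆ D)
    (F : H → H) (L : ℝ) (hL : 0 < L)
    (hmono : ∀ x ∈ D, ∀ y ∈ D, 0 ≤ ⟪F x - F y, x - y⟫)
    (hlip : ∀ x ∈ D, ∀ y ∈ D, ‖F x - F y‖ ≤ L * ‖x - y‖)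
    (B : H → Set H) (hB : IsMaxMonotoneOp B)
    (hdomB : ∀ z : H, (B z).Nonempty → z ∈ C)
    (PC : H → H)
    (hPC : ∀ u : H, PC u ∈ C ∧ ∀ z ∈ C, ⟪u - PC u, z - PC u⟫ ≤ 0)
    (σ lam : ℝ) (hσ0 : 0 < σ) (hσ1 : σ < 1) (hlam : lam = σ / L)
    (wt w' y v : H)
    (hw' : w' = PC wt)
    (hy : (1 / lam) • (wt - lam • F w' - y) ∈ B y)
    (hv : v = F y - F w' + (1 / lam) • (wt - y)) :
    v - F y ∈ B y ∧ ‖lam • v + y - wt‖ ≤ σ * ‖y - wt‖ := by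
  have hlam0 : 0 < lam := by rw [hlam]; positivity
  have hyC : y ∈ C := hdomB y ⟨_, hy⟩
  obtain ⟨hwC, hproj⟩ := hPC wt
  rw [← hw'] at hwC hproj
  have hne : lam ≠ 0 := hlam0.ne'
  have hlL : lam * L = σ := by rw [hlam]; field_simp
  constructor
  · have e : v - F y = (1 / lam) • (wt - lam • F w' - y) := by
      have h1 : (1 / lam) • (lam • F w') = F w' := by
        rw [smul_smul, one_div, inv_mul_cancel₀ hne, one_smul]
      rw [hv, smul_sub, smul_sub, smul_sub, h1]
      abel
    rw [e]; exact hy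
  · have e : lam • v + y - wt = lam • (F y - F w') := by
      have h1 : lam • ((1 / lam) • (wt - y)) = wt - y := by
        rw [smul_smul, one_div, mul_inv_cancel₀ hne, one_smul]
      rw [hv, smul_add, h1]
      abel
    have hn : ‖y - w'‖ ≤ ‖y - wt‖ := by
      have h2 : ‖y - wt‖ ^ 2 = ‖y - w'‖ ^ 2 - 2 * ⟪y - w', wt - w'⟫ + ‖wt - w'‖ ^ 2 := by
        rw [← norm_sub_sq_real]; congr 2; abel
      have h3 := hproj y hyC
      rw [real_inner_comm] at h3
      refine abs_le_of_sq_le_sq' ?_ (norm_nonneg _) |>.2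
      nlinarith [sq_nonneg ‖wt - w'‖]
    rw [e, norm_smul, Real.norm_of_nonneg hlam0.le]
    calc lam * ‖F y - F w'‖ ≤ lam * (L * ‖y - w'‖) :=
          mul_le_mul_of_nonneg_left (hlip y (hCD hyC) w' (hCD hwC)) hlam0.le
      _ = σ * ‖y - w'‖ := by rw [← mul_assoc, hlL]
      _ ≤ σ * ‖y - wt‖ := mul_le_mul_of_nonneg_left hn hσ0.le
end

section
/- (One iteration of the inertial forward-backward method is an inexact proximal step for F + B.) Let σ ∈ (0,1), λ := 2σ²/L and w̃ ∈ H. Set w' := P_C(w̃), let y ∈ H satisfy (w̃ − λ F(w') − y)/λ ∈ B(y) (i.e. y is the resolvent (λB + I)⁻¹(w̃ − λ F(w'))), and set v := (w̃ − y)/λ and ε := L‖y − w'‖²/4. Then F(w') ∈ F^ε(y), hence v ∈ F^ε(y) + B(y); moreover λv + y − w̃ = 0 and 2λε ≤ σ² ‖y − w̃‖². -/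
open scoped RealInnerProductSpace
open Filter Topology

variable {H : Type*} [NormedAddCommGroup H] [InnerProductSpace ℝ H] [CompleteSpace H]

/-- Proposition 5.3: one iteration of the inertial forward-backward method is an
inexact proximal step for F + B, where F is (1/L)-cocoercive. -/
theorem stmt17
    (C : Set H) (hCne : C.Nonempty) (hCcl : IsClosed C) (hCconv : Convex ℝ C)
    (F : H → H) (L : ℝ) (hL : 0 < L)
    (hcoco : ∀ x y : H, (1 / L) * ‖F x - F y‖ ^ 2 ≤ ⟪F x - F y, x - y⟫)
    (B : H → Set H) (hB : IsMaxMonotoneOp B)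
    (hdomB : ∀ z : H, (B z).Nonempty → z ∈ C)
    (PC : H → H)
    (hPC : ∀ u : H, PC u ∈ C ∧ ∀ z ∈ C, ⟪u - PC u, z - PC u⟫ ≤ 0)
    (σ lam : ℝ) (hσ0 : 0 < σ) (hσ1 : σ < 1) (hlam : lam = 2 * σ ^ 2 / L)
    (wt w' y v : H) (ε : ℝ)
    (hw' : w' = PC wt)
    (hy : (1 / lam) • (wt - lam • F w' - y) ∈ B y)
    (hv : v = (1 / lam) • (wt - y))
    (hε : ε = L * ‖y - w'‖ ^ 2 / 4) :
    (∀ z : H, ⟪F z - F w', z - y⟫ ≥ -ε) ∧ v - F w' ∈ B y ∧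
      lam • v + y - wt = 0 ∧ 2 * lam * ε ≤ σ ^ 2 * ‖y - wt‖ ^ 2 := by
  have hlp : 0 < lam := by rw [hlam]; positivity
  have hv2 : lam • v = wt - y := by
    rw [hv, smul_smul, mul_one_div_cancel hlp.ne', one_smul]
  refine ⟨?_, ?_, ?_, ?_⟩
  · intro z
    have h1 := hcoco z w'
    have h2 : ⟪F z - F w', z - y⟫ = ⟪F z - F w', z - w'⟫ - ⟪F z - F w', y - w'⟫ := by
      rw [← inner_sub_right]; congr 1; abel
    have h3 := real_inner_le_norm (F z - F w') (y - w')
    have h4 : 0 ≤ (1 / L) * (‖F z - F w'‖ - L * ‖y - w'‖ / 2) ^ 2 := by positivity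
    have h5 : (1 / L) * (‖F z - F w'‖ - L * ‖y - w'‖ / 2) ^ 2
        = (1 / L) * ‖F z - F w'‖ ^ 2 - ‖F z - F w'‖ * ‖y - w'‖ + L * ‖y - w'‖ ^ 2 / 4 := by
      field_simp
      ring
    rw [h2, hε]
    linarith
  · have h : v - F w' = (1 / lam) • (wt - lam • F w' - y) := by
      rw [hv, sub_right_comm, smul_sub (1 / lam) (wt - y), smul_smul,
        one_div_mul_cancel hlp.ne', one_smul]
    rw [h]; exact hy
  · rw [hv2]; abel
  · have hyC : y ∈ C := hdomB y ⟨_, hy⟩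
    have h1 := (hPC wt).2 y hyC
    rw [← hw'] at h1
    have h2 : ‖y - wt‖ ^ 2 = ‖y - w'‖ ^ 2 - 2 * ⟪wt - w', y - w'⟫ + ‖wt - w'‖ ^ 2 := by
      have : y - wt = (y - w') - (wt - w') := by abel
      rw [this, norm_sub_sq_real, real_inner_comm]
    have h3 : 2 * lam * ε = σ ^ 2 * ‖y - w'‖ ^ 2 := by
      rw [hlam, hε]; field_simp; ring
    rw [h3]
    apply mul_le_mul_of_nonneg_left _ (sq_nonneg σ)
    nlinarith [sq_nonneg ‖wt - w'‖]
end
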